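/- Let f : R → R' be a homomorphism of commutative rings such that R' is finitely presented as an R-algebra, and suppose f is a v-cover: for every valuation ring V and every ring homomorphism R → V there exist a valuation ring V', an injective local ring homomorphism V → V', and a ring homomorphism R' → V' making the square R → R', R → V → V' commute. Then f is a universal descent morphism. -/

import Mathlib

open CategoryTheory CategoryTheory.Pretriangulated

universe u

instance restrictScalarsAdditive {R S : Type u} [CommRing R] [CommRing S] (f : R →+* S) :
    (ModuleCat.restrictScalars.{u} f).Additive where
  map_add := rfl

/-- `f : R →+* S` is a universal descent morphism if the smallest strictly full triangulated
subcategory of `D(R)` closed under direct summands and containing all restrictions of scalars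
of objects of `D(S)` is all of `D(R)`. -/
def IsUniversalDescent {R S : Type u} [CommRing R] [CommRing S] (f : R →+* S) : Prop :=
  letI := HasDerivedCategory.standard (ModuleCat.{u} R)
  ∀ P : DerivedCategory (ModuleCat.{u} R) → Prop,
    (∀ X Y : DerivedCategory (ModuleCat.{u} R), (X ≅ Y) → P X → P Y) →
    (∀ X, P X → P (X⟦(1 : ℤ)⟧)) →
    (∀ X, P X → P (X⟦(-1 : ℤ)⟧)) →
    (∀ T : Triangle (DerivedCategory (ModuleCat.{u} R)),
      (T ∈ distTriang (DerivedCategory (ModuleCat.{u} R))) →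
      P T.obj₁ → P T.obj₂ → P T.obj₃) →
    (∀ (X Y : DerivedCategory (ModuleCat.{u} R)) (i : X ⟶ Y) (r : Y ⟶ X),
      i ≫ r = 𝟙 X → P Y → P X) →
    (∀ K : CochainComplex (ModuleCat.{u} S) ℤ,
      P (DerivedCategory.Q.obj
        (((ModuleCat.restrictScalars.{u} f).mapHomologicalComplex (ComplexShape.up ℤ)).obj K))) →
    ∀ X, P X


namespace UD

open CategoryTheory Limits

universe v w

section Abstract
variable {𝒜 : Type w} [Category.{v} 𝒜] [Abelian 𝒜]

structure Thick (P : 𝒜 → Prop) : Prop where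
  x1 : ∀ S : ShortComplex 𝒜, S.ShortExact → P S.X₂ → P S.X₃ → P S.X₁
  x2 : ∀ S : ShortComplex 𝒜, S.ShortExact → P S.X₁ → P S.X₃ → P S.X₂
  x3 : ∀ S : ShortComplex 𝒜, S.ShortExact → P S.X₁ → P S.X₂ → P S.X₃
  ret : ∀ (X Y : 𝒜) (i : X ⟶ Y) (r : Y ⟶ X), i ≫ r = 𝟙 X → P Y → P X

variable {P : 𝒜 → Prop}

lemma Thick.iso (hP : Thick P) {X Y : 𝒜} (e : X ≅ Y) (h : P X) : P Y :=
  hP.ret Y X e.inv e.hom (by simp) h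

lemma ses_image (S : ShortComplex 𝒜) (hS : S.Exact) :
    (ShortComplex.mk (Abelian.image.ι S.f) (Abelian.factorThruImage S.g) (by
      rw [← cancel_mono (Abelian.image.ι S.g), ← cancel_epi (Abelian.factorThruImage S.f)]
      simp)).ShortExact := by
  have h1 := (S.exact_iff_exact_image_ι).1 hS
  refine { exact := ?_, mono_f := by dsimp; infer_instance, epi_g := by dsimp; infer_instance }
  refine (ShortComplex.exact_iff_of_epi_of_isIso_of_mono
    (S₁ := ShortComplex.mk (Abelian.image.ι S.f) (Abelian.factorThruImage S.g) _)
    (S₂ := ShortComplex.mk (Abelian.image.ι S.f) S.g (by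
      rw [← cancel_epi (Abelian.factorThruImage S.f)]; simp))
    { τ₁ := 𝟙 _, τ₂ := 𝟙 _, τ₃ := Abelian.image.ι S.g }).2 h1

lemma Thick.image_of_mono (hP : Thick P) {X Y : 𝒜} (f : X ⟶ Y) [Mono f] (h : P X) :
    P (Abelian.image f) := hP.iso (asIso (Abelian.factorThruImage f)) h

lemma Thick.image_of_epi (hP : Thick P) {X Y : 𝒜} (f : X ⟶ Y) [Epi f] (h : P Y) :
    P (Abelian.image f) := hP.iso (asIso (Abelian.image.ι f)).symm h

lemma Thick.ker_of_comp (hP : Thick P) {X Y Z : 𝒜} (W : X ⟶ Y) (d : Y ⟶ Z) [Epi d]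
    (h1 : P (kernel W)) (h2 : P (cokernel W))
    (h3 : P (kernel (W ≫ d))) (h4 : P (cokernel (W ≫ d))) : P (kernel d) := by
  have E := kernelCokernelCompSequence_exact W d
  have e0 := E.exact 0
  have e1 := E.exact 1
  have e2 := E.exact 2
  have e3 := E.exact 3
  have : Epi (cokernel.map W (W ≫ d) (𝟙 _) d (by simp)) := by
    have hh : cokernel.π W ≫ cokernel.map W (W ≫ d) (𝟙 _) d (by simp) = d ≫ cokernel.π (W ≫ d) := by
      simp
    exact epi_of_epi_fac hh
  have s0 := ses_image _ e0
  have s1 := ses_image _ e1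
  have s2 := ses_image _ e2
  have a0 : P (Abelian.image (kernel.map W (W ≫ d) (𝟙 _) d (by simp))) :=
    hP.image_of_mono _ h1
  have a1 : P (Abelian.image (kernel.map (W ≫ d) d W (𝟙 _) (by simp))) :=
    hP.x3 _ s0 a0 h3
  have a3 : P (Abelian.image (cokernel.map W (W ≫ d) (𝟙 _) d (by simp))) :=
    hP.image_of_epi _ h4
  have a2 : P (Abelian.image (kernelCokernelCompSequence.δ W d)) :=
    hP.x1 _ s2 h2 a3
  exact hP.x2 _ s1 a1 a2

lemma Thick.biprod (hP : Thick P) {X Y : 𝒜} (h1 : P X) (h2 : P Y) : P (X ⊞ Y) :=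
  hP.x2 (ShortComplex.mk (biprod.inl : X ⟶ X ⊞ Y) biprod.snd (by simp))
    (ShortComplex.Splitting.shortExact
      { r := biprod.fst, s := biprod.inr }) h1 h2

lemma Thick.ker_biprod (hP : Thick P) {X Y X' Y' : 𝒜} (a : X ⟶ X') (b : Y ⟶ Y')
    (h1 : P (kernel a)) (h2 : P (kernel b)) : P (kernel (biprod.map a b)) := by
  refine hP.ret _ (kernel a ⊞ kernel b)
    (biprod.lift (kernel.lift a (kernel.ι _ ≫ biprod.fst) ?_)
      (kernel.lift b (kernel.ι _ ≫ biprod.snd) ?_))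
    (kernel.lift _ (biprod.map (kernel.ι a) (kernel.ι b)) ?_) ?_ (hP.biprod h1 h2)
  · rw [Category.assoc, ← biprod.map_fst a b, kernel.condition_assoc, zero_comp]
  · rw [Category.assoc, ← biprod.map_snd a b, kernel.condition_assoc, zero_comp]
  · ext <;> simp
  · ext <;> simp

lemma Thick.coker_biprod (hP : Thick P) {X Y X' Y' : 𝒜} (a : X ⟶ X') (b : Y ⟶ Y')
    (h1 : P (cokernel a)) (h2 : P (cokernel b)) : P (cokernel (biprod.map a b)) := by
  refine hP.ret _ (cokernel a ⊞ cokernel b)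
    (cokernel.desc _ (biprod.map (cokernel.π a) (cokernel.π b)) ?_)
    (biprod.desc (cokernel.desc a (biprod.inl ≫ cokernel.π _) ?_)
      (cokernel.desc b (biprod.inr ≫ cokernel.π _) ?_)) ?_ (hP.biprod h1 h2)
  · ext <;> simp
  · rw [← Category.assoc, ← biprod.inl_map a b, Category.assoc, cokernel.condition, comp_zero]
  · rw [← Category.assoc, ← biprod.inr_map a b, Category.assoc, cokernel.condition, comp_zero]
  · ext <;> simp

variable {R : Type u} [CommRing R] [Linear R 𝒜]

lemma ker_act (f g : R) {N : 𝒜} (T w : N ⟶ N) (hw : w = f • T - g • 𝟙 N) :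
    ∃ T' : kernel w ⟶ kernel w, f • T' = g • 𝟙 _ := by
  have hc : T ≫ w = w ≫ T := by subst hw; simp [Preadditive.comp_sub, Preadditive.sub_comp]
  refine ⟨kernel.lift w (kernel.ι w ≫ T) (by simp [hc]), ?_⟩
  rw [← cancel_mono (kernel.ι w)]
  have := (congrArg (fun z => kernel.ι w ≫ z) hw.symm).trans (kernel.condition w)
  rw [Preadditive.comp_sub, sub_eq_zero] at this
  simpa using this

lemma coker_act (f g : R) {N : 𝒜} (T w : N ⟶ N) (hw : w = f • T - g • 𝟙 N) :
    ∃ T' : cokernel w ⟶ cokernel w, f • T' = g • 𝟙 _ := by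
  have hc : T ≫ w = w ≫ T := by subst hw; simp [Preadditive.comp_sub, Preadditive.sub_comp]
  refine ⟨cokernel.desc w (T ≫ cokernel.π w) (by rw [← Category.assoc, ← hc]; simp), ?_⟩
  rw [← cancel_epi (cokernel.π w)]
  have := (congrArg (fun z => z ≫ cokernel.π w) hw.symm).trans (cokernel.condition w)
  rw [Preadditive.sub_comp, sub_eq_zero] at this
  simpa using this

lemma Thick.blow (hP : Thick P) (f g : R)
    (H1 : ∀ (N : 𝒜) (T : N ⟶ N), f • T = g • 𝟙 N → P N)
    (H2 : ∀ (N : 𝒜) (T : N ⟶ N), g • T = f • 𝟙 N → P N)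
    {X E : 𝒜} (i : X ⟶ E) (e : E ⟶ X) (s t : E ⟶ E)
    (hst : s ≫ t = 𝟙 E) (hie : i ≫ e = 𝟙 X) (hit : i ≫ t = 0) (hse : s ≫ e = 0) : P X := by
  let wA : E ⟶ E := f • s - g • 𝟙 E
  let wB : E ⟶ E := g • s - f • 𝟙 E
  let d : E ⊞ E ⟶ E ⊞ E :=
    biprod.desc biprod.inl (- (e ≫ i ≫ biprod.inl) - t ≫ biprod.inr)
  let T : E ⊞ E ⟶ E ⊞ E :=
    biprod.desc (s ≫ biprod.inl) (e ≫ i ≫ biprod.inl + t ≫ biprod.inr)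
  have hw : biprod.map wA wB ≫ d = f • T - g • 𝟙 _ := by
    ext <;> simp [wA, wB, d, T, Preadditive.sub_comp, reassoc_of% hse, hst]
  have hd : (biprod.desc biprod.inl (-(s ≫ biprod.inr)) : E ⊞ E ⟶ E ⊞ E) ≫ d = 𝟙 _ := by
    ext <;> simp [d, reassoc_of% hse, hst]
  have : Epi d := by
    have : IsSplitEpi d := ⟨⟨_, hd⟩⟩
    infer_instance
  obtain ⟨T1, hT1⟩ := ker_act f g s wA rfl
  obtain ⟨T2, hT2⟩ := coker_act f g s wA rfl
  obtain ⟨T3, hT3⟩ := ker_act g f s wB rfl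
  obtain ⟨T4, hT4⟩ := coker_act g f s wB rfl
  obtain ⟨T5, hT5⟩ := ker_act f g T _ hw
  obtain ⟨T6, hT6⟩ := coker_act f g T _ hw
  have key := hP.ker_of_comp (biprod.map wA wB) d
    (hP.ker_biprod _ _ (H1 _ _ hT1) (H2 _ _ hT3)) (hP.coker_biprod _ _ (H1 _ _ hT2) (H2 _ _ hT4))
    (H1 _ _ hT5) (H1 _ _ hT6)
  refine hP.ret X _ (kernel.lift d (biprod.lift i i) ?_) (kernel.ι d ≫ biprod.snd ≫ e) ?_ key
  · ext <;> simp [d, hit, reassoc_of% hie]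
  · simp [hie]

lemma Thick.split (hP : Thick P) (f g : R) (hfg : f * g = 0)
    (H1 : ∀ (N : 𝒜), f • 𝟙 N = 0 → P N)
    (H2 : ∀ (N : 𝒜), g • 𝟙 N = 0 → P N) (X : 𝒜) : P X := by
  have S := ses_image (ShortComplex.mk (kernel.ι (f • 𝟙 X)) (f • 𝟙 X) (kernel.condition _))
    (ShortComplex.exact_of_f_is_kernel _ (kernelIsKernel _))
  refine hP.x2 _ S (hP.image_of_mono _ (H1 _ ?_)) (H2 _ ?_)
  · rw [← cancel_mono (kernel.ι (f • 𝟙 X))]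
    have := kernel.condition (f • 𝟙 X)
    simpa using this
  · dsimp
    rw [← cancel_epi (Abelian.factorThruImage (f • 𝟙 X)),
      ← cancel_mono (Abelian.image.ι (f • 𝟙 X))]
    simp [smul_smul, mul_comm g f, hfg]

end Abstract
end UD

namespace UD
open CategoryTheory Limits

abbrev Ch (R : Type u) [CommRing R] := CochainComplex (ModuleCat.{u} R) ℤ

noncomputable abbrev res {R S : Type u} [CommRing R] [CommRing S] (f : R →+* S) : Ch S ⥤ Ch R :=
  (ModuleCat.restrictScalars.{u} f).mapHomologicalComplex (ComplexShape.up ℤ)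

section
variable {R S : Type u} [CommRing R] [CommRing S]

noncomputable def mkIso {M N : ModuleCat.{u} R} (e : M ≃ₗ[R] N) : M ≅ N := e.toModuleIso

lemma act (f : R →+* S) (K : Ch R) (φ : S →+* End K)
    (hφ : ∀ r : R, φ (f r) = r • 𝟙 K) : ∃ K' : Ch S, Nonempty ((res f).obj K' ≅ K) := by
  let inst : ∀ i, Module S (K.X i) := fun i =>
    { smul := fun s x => ((φ s : K ⟶ K).f i).hom x
      one_smul := fun x => by
        change ((φ 1 : K ⟶ K).f i).hom x = x
        rw [map_one]; rfl
      mul_smul := fun a b x => by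
        change ((φ (a * b) : K ⟶ K).f i).hom x = ((φ a : K ⟶ K).f i).hom (((φ b : K ⟶ K).f i).hom x)
        rw [map_mul]; rfl
      smul_zero := fun a => map_zero _
      smul_add := fun a x y => map_add _ _ _
      add_smul := fun a b x => by
        change ((φ (a + b) : K ⟶ K).f i).hom x = ((φ a : K ⟶ K).f i).hom x + ((φ b : K ⟶ K).f i).hom x
        rw [map_add]; rfl
      zero_smul := fun x => by
        change ((φ 0 : K ⟶ K).f i).hom x = 0
        rw [map_zero]; rfl }
  have hs : ∀ i (s : S) (x : K.X i), s • x = ((φ s : K ⟶ K).f i).hom x := fun _ _ _ => rfl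
  have hfr : ∀ i (r : R) (x : K.X i), ((φ (f r) : K ⟶ K).f i).hom x = r • x := by
    intro i r x
    rw [hφ]; rfl
  let K' : Ch S :=
    { X := fun i => ModuleCat.of S (K.X i)
      d := fun i j => ModuleCat.ofHom
        { toFun := fun x => (K.d i j).hom x
          map_add' := fun x y => map_add _ _ _
          map_smul' := fun s x => by
            simp only [hs, RingHom.id_apply]
            have := (φ s : K ⟶ K).comm i j
            have h2 := congrArg (fun m => m.hom x) this
            exact h2 }
      shape := fun i j h => by
        ext x
        change (K.d i j).hom x = 0
        rw [K.shape i j h]; rfl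
      d_comp_d' := fun i j k _ _ => by
        ext x
        change (K.d j k).hom ((K.d i j).hom x) = 0
        exact ConcreteCategory.congr_hom (K.d_comp_d i j k) x }
  refine ⟨K', ⟨HomologicalComplex.Hom.isoOfComponents (fun i => mkIso
    (M := (ModuleCat.restrictScalars f).obj (K'.X i)) (N := K.X i)
    { toFun := fun x => x
      invFun := fun x => x
      map_add' := fun _ _ => rfl
      map_smul' := fun r x => ?_
      left_inv := fun _ => rfl
      right_inv := fun _ => rfl }) ?_⟩⟩
  · exact hfr i r x
  · intro i j _
    rfl

def Desc (f : R →+* S) : Prop :=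
  ∀ P : Ch R → Prop, Thick P → (∀ K, P ((res f).obj K)) → ∀ K, P K

lemma Thick.of_act {P : Ch R → Prop} (hP : Thick P) (f : R →+* S)
    (h : ∀ K, P ((res f).obj K)) (K : Ch R) (φ : S →+* End K)
    (hφ : ∀ r : R, φ (f r) = r • 𝟙 K) : P K := by
  obtain ⟨K', ⟨e⟩⟩ := act f K φ hφ
  exact hP.iso e (h K')

lemma thick_res (f : R →+* S) {P : Ch R → Prop} (hP : Thick P) :
    Thick (fun K : Ch S => P ((res f).obj K)) := by
  have key : ∀ T : ShortComplex (Ch S), T.ShortExact → (T.map (res f)).ShortExact := by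
    intro T hT
    refine HomologicalComplex.shortExact_of_degreewise_shortExact _ fun i => ?_
    have := hT.map_of_exact (HomologicalComplex.eval (ModuleCat S) (ComplexShape.up ℤ) i)
    exact this.map_of_exact (ModuleCat.restrictScalars f)
  exact
  { x1 := fun T hT => hP.x1 _ (key T hT)
    x2 := fun T hT => hP.x2 _ (key T hT)
    x3 := fun T hT => hP.x3 _ (key T hT)
    ret := fun X Y i r h => hP.ret _ _ ((res f).map i) ((res f).map r) (by
      rw [← Functor.map_comp, h, CategoryTheory.Functor.map_id]) }

lemma res_comp {T : Type u} [CommRing T] (f : R →+* S) (g : S →+* T) (h : R →+* T)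
    (e : g.comp f = h) (K : Ch T) :
    Nonempty ((res f).obj ((res g).obj K) ≅ (res h).obj K) := by
  subst e
  refine ⟨HomologicalComplex.Hom.isoOfComponents (fun i => mkIso
    (M := (ModuleCat.restrictScalars f).obj ((ModuleCat.restrictScalars g).obj (K.X i)))
    (N := (ModuleCat.restrictScalars (g.comp f)).obj (K.X i))
    { toFun := fun x => x
      invFun := fun x => x
      map_add' := fun _ _ => rfl
      map_smul' := fun r x => rfl
      left_inv := fun _ => rfl
      right_inv := fun _ => rfl }) ?_⟩
  intro i j _
  rfl

lemma Desc.retract (f : R →+* S) (l : S → R) (hl0 : ∀ x y, l (x + y) = l x + l y)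
    (hl1 : ∀ r s, l (f r * s) = r * l s) (hl : l 1 = 1) : Desc f := by
  intro P hP h K
  let _ := f.toAlgebra
  let L : S →ₗ[R] R :=
    { toFun := l, map_add' := hl0, map_smul' := fun r s => by
        rw [Algebra.smul_def]; exact hl1 r s }
  let K' : Ch S :=
    { X := fun i => ModuleCat.of S (TensorProduct R S (K.X i))
      d := fun i j => ModuleCat.ofHom ((K.d i j).hom.baseChange S)
      shape := fun i j h => by
        rw [K.shape i j h]
        ext x
        simp
      d_comp_d' := fun i j k _ _ => by
        rw [← ModuleCat.ofHom_comp, ← LinearMap.baseChange_comp, ← ModuleCat.hom_comp, K.d_comp_d]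
        ext x
        simp }
  let i : K ⟶ (res f).obj K' :=
    { f := fun i => ModuleCat.ofHom (Y := (ModuleCat.restrictScalars f).obj (K'.X i))
        { toFun := fun x => (1 : S) ⊗ₜ[R] (x : K.X i)
          map_add' := fun x y => TensorProduct.tmul_add _ _ _
          map_smul' := fun r x => by
            change _ = (f r) • ((1 : S) ⊗ₜ[R] (x : K.X i))
            rw [TensorProduct.tmul_smul]
            rfl }
      comm' := fun i j _ => by
        ext x
        rfl }
  let q : ∀ i, TensorProduct R S (K.X i) →ₗ[R] K.X i := fun i =>
    (TensorProduct.lid R (K.X i)).toLinearMap ∘ₗ LinearMap.rTensor (K.X i) L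
  have hq1 : ∀ i (r : R) (x : TensorProduct R S (K.X i)), q i ((f r) • x) = r • q i x := by
    intro i r x
    rw [← map_smul, ← algebraMap_smul S r x]
    rfl
  have hq2 : ∀ i j (x : TensorProduct R S (K.X i)),
      (K.d i j).hom (q i x) = q j ((K.d i j).hom.baseChange S x) := by
    intro i j x
    induction x using TensorProduct.induction_on with
    | zero => simp
    | tmul s x => simp [q]
    | add x y hx hy => rw [map_add, map_add, map_add, map_add, hx, hy]
  let r : (res f).obj K' ⟶ K :=
    { f := fun i => ModuleCat.ofHom (X := (ModuleCat.restrictScalars f).obj (K'.X i))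
        { toFun := q i
          map_add' := fun x y => (q i).map_add x y
          map_smul' := fun r x => hq1 i r x }
      comm' := fun i j _ => by
        ext x
        exact hq2 i j x }
  refine hP.ret K _ i r ?_ (h K')
  ext n x
  change TensorProduct.lid R _ (LinearMap.rTensor _ L ((1 : S) ⊗ₜ[R] (x : K.X n))) = x
  simp [L, hl]

end
end UD

namespace UD
open CategoryTheory Limits

section
variable {R S : Type u} [CommRing R] [CommRing S]

lemma cover_split (f g : R) (hfg : f * g = 0) {P : Ch R → Prop} (hP : Thick P)
    (h1 : ∀ K, P ((res (Ideal.Quotient.mk (Ideal.span {f}))).obj K))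
    (h2 : ∀ K, P ((res (Ideal.Quotient.mk (Ideal.span {g}))).obj K)) (K : Ch R) : P K := by
  have key : ∀ (a : R), (∀ K, P ((res (Ideal.Quotient.mk (Ideal.span {a}))).obj K)) →
      ∀ N : Ch R, a • 𝟙 N = 0 → P N := by
    intro a ha N hN
    refine hP.of_act _ ha N (Ideal.Quotient.lift _ (algebraMap R (End N)) ?_) ?_
    · intro r hr
      obtain ⟨b, rfl⟩ := Ideal.mem_span_singleton'.1 hr
      rw [map_mul]
      have : algebraMap R (End N) a = 0 := by
        rw [Algebra.algebraMap_eq_smul_one]; exact hN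
      rw [this, mul_zero]
    · intro r
      rw [Ideal.Quotient.lift_mk, Algebra.algebraMap_eq_smul_one]; rfl
  exact hP.split f g hfg (key f h1) (key g h2) K

/-- the ring `R[t]/(f t - g)` -/
abbrev Blow (f g : R) : Type u :=
  Polynomial R ⧸ Ideal.span {Polynomial.C f * Polynomial.X - Polynomial.C g}

noncomputable def blowMap (f g : R) : R →+* Blow f g :=
  (Ideal.Quotient.mk _).comp Polynomial.C

lemma cover_blow (f g : R) {P : Ch R → Prop} (hP : Thick P)
    (h1 : ∀ K, P ((res (blowMap f g)).obj K))
    (h2 : ∀ K, P ((res (blowMap g f)).obj K)) (K : Ch R) : P K := by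
  have key : ∀ (f g : R), (∀ K, P ((res (blowMap f g)).obj K)) →
      ∀ (N : Ch R) (T : N ⟶ N), f • T = g • 𝟙 N → P N := by
    intro f g h N T hN
    refine hP.of_act _ h N (Ideal.Quotient.lift _
      (Polynomial.aeval (R := R) (A := End N) T).toRingHom ?_) ?_
    · intro r hr
      obtain ⟨b, rfl⟩ := Ideal.mem_span_singleton'.1 hr
      rw [map_mul]
      have : (Polynomial.aeval (R := R) (A := End N) T).toRingHom
          (Polynomial.C f * Polynomial.X - Polynomial.C g) = 0 := by
        simp only [AlgHom.toRingHom_eq_coe, RingHom.coe_coe, map_sub, map_mul, Polynomial.aeval_C,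
          Polynomial.aeval_X, sub_eq_zero, Algebra.algebraMap_eq_smul_one, smul_mul_assoc, one_mul]
        exact hN
      rw [this, mul_zero]
    · intro r
      simp only [blowMap, RingHom.comp_apply, Ideal.Quotient.lift_mk, AlgHom.toRingHom_eq_coe,
        RingHom.coe_coe, Polynomial.aeval_C, Algebra.algebraMap_eq_smul_one]
      rfl
  let E : Ch R :=
    { X := fun i => ModuleCat.of R (ℕ → K.X i)
      d := fun i j => ModuleCat.ofHom ((K.d i j).hom.compLeft ℕ)
      shape := fun i j h => by
        rw [K.shape i j h]; rfl
      d_comp_d' := fun i j k _ _ => by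
        ext x n
        change (K.d j k).hom ((K.d i j).hom (x n)) = 0
        exact congrArg (fun m => m.hom (x n)) (K.d_comp_d i j k) }
  let i : K ⟶ E :=
    { f := fun i => ModuleCat.ofHom (Y := E.X i)
        { toFun := fun x => (fun n : ℕ => match n with | 0 => x | _ + 1 => 0 : ℕ → K.X i)
          map_add' := fun x y => by funext n; cases n <;> simp [E]
          map_smul' := fun r x => by funext n; cases n <;> simp [E] }
      comm' := fun i j _ => by
        ext x n
        cases n
        · rfl
        · exact map_zero (K.d i j).hom }
  let e : E ⟶ K :=
    { f := fun i => ModuleCat.ofHom (X := E.X i)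
        { toFun := fun x => (x : ℕ → K.X i) 0
          map_add' := fun x y => rfl
          map_smul' := fun r x => rfl }
      comm' := fun i j _ => by
        ext x
        rfl }
  let s : E ⟶ E :=
    { f := fun i => ModuleCat.ofHom (X := E.X i) (Y := E.X i)
        { toFun := fun x => (fun n : ℕ => match n with | 0 => 0 | n + 1 => (x : ℕ → K.X i) n : ℕ → K.X i)
          map_add' := fun x y => by
            funext n
            cases n
            · exact (add_zero _).symm
            · rfl
          map_smul' := fun r x => by
            funext n
            cases n
            · exact (smul_zero (A := K.X i) r).symm
            · rfl }
      comm' := fun i j _ => by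
        ext x n
        cases n
        · exact map_zero (K.d i j).hom
        · rfl }
  let t : E ⟶ E :=
    { f := fun i => ModuleCat.ofHom (X := E.X i) (Y := E.X i)
        { toFun := fun x => (fun n : ℕ => (x : ℕ → K.X i) (n + 1) : ℕ → K.X i)
          map_add' := fun x y => rfl
          map_smul' := fun r x => rfl }
      comm' := fun i j _ => by
        ext x
        rfl }
  refine hP.blow f g (key f g h1) (key g f h2) i e s t ?_ ?_ ?_ ?_
  · ext n x; rfl
  · ext n x; rfl
  · ext n x; rfl
  · ext n x; rfl

lemma Desc.isUniversalDescent {f : R →+* S} (h : Desc f) : IsUniversalDescent f := by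
  let := HasDerivedCategory.standard (ModuleCat.{u} R)
  intro P hiso hs hs' htr hret hK X
  have hx3 : ∀ T : ShortComplex (Ch R), T.ShortExact → P (DerivedCategory.Q.obj T.X₁) →
      P (DerivedCategory.Q.obj T.X₂) → P (DerivedCategory.Q.obj T.X₃) := fun T hT a b =>
    htr _ (DerivedCategory.triangleOfSES_distinguished hT) a b
  have hx1 : ∀ T : ShortComplex (Ch R), T.ShortExact → P (DerivedCategory.Q.obj T.X₂) →
      P (DerivedCategory.Q.obj T.X₃) → P (DerivedCategory.Q.obj T.X₁) := fun T hT a b => by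
    have := htr _ (rot_of_distTriang _ (DerivedCategory.triangleOfSES_distinguished hT)) a b
    exact hiso _ _ ((shiftEquiv (DerivedCategory (ModuleCat.{u} R)) (1 : ℤ)).unitIso.app _).symm (hs' _ this)
  have hx2 : ∀ T : ShortComplex (Ch R), T.ShortExact → P (DerivedCategory.Q.obj T.X₁) →
      P (DerivedCategory.Q.obj T.X₃) → P (DerivedCategory.Q.obj T.X₂) := fun T hT a b =>
    htr _ (inv_rot_of_distTriang _ (DerivedCategory.triangleOfSES_distinguished hT)) (hs' _ b) a
  have := h (fun K => P (DerivedCategory.Q.obj K))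
    { x1 := hx1, x2 := hx2, x3 := hx3, ret := fun X Y i r e hY =>
        hret _ _ (DerivedCategory.Q.map i) (DerivedCategory.Q.map r)
          (by rw [← Functor.map_comp, e, CategoryTheory.Functor.map_id]) hY } hK
  exact hiso _ _ (DerivedCategory.Q.objObjPreimageIso X) (this _)

end
end UD

namespace UD
open CategoryTheory Limits

section
variable {R S : Type u} [CommRing R] [CommRing S]

/-- relative descent of the base change of `f` along `g` -/
def DD (f : R →+* S) {C : Type u} [CommRing C] (g : R →+* C) : Prop :=
  ∀ P : Ch C → Prop, Thick P →
    (∀ (T : Type u) (_ : CommRing T) (a : C →+* T) (b : S →+* T), a.comp g = b.comp f →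
      ∀ K, P ((res a).obj K)) → ∀ K, P K

variable (f : R →+* S) {C : Type u} [CommRing C] (g : R →+* C)

lemma DD.desc (h : DD f (RingHom.id R)) : Desc f := by
  intro P hP hK
  refine h P hP fun T _ a b hab K => ?_
  obtain ⟨e⟩ := res_comp f b a (by rw [← hab, RingHom.comp_id]) K
  exact hP.iso e (hK _)

lemma DD.of_hom (b : S →+* C) (h : b.comp f = g) : DD f g := by
  intro P hP hK
  exact Desc.retract (RingHom.id C) id (fun _ _ => rfl) (fun _ _ => rfl) rfl P hP
    (hK C _ (RingHom.id C) b (by rw [h, RingHom.id_comp]))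

lemma DD.pull {f : R →+* S} {g : R →+* C} {C' : Type u} [CommRing C'] (c : C →+* C')
    (h : DD f (c.comp g)) {P : Ch C → Prop} (hP : Thick P)
    (hK : ∀ (T : Type u) (_ : CommRing T) (a : C →+* T) (b : S →+* T), a.comp g = b.comp f →
      ∀ K, P ((res a).obj K)) (K : Ch C') : P ((res c).obj K) := by
  refine h _ (thick_res c hP) (fun T _ a b hab K => ?_) K
  obtain ⟨e⟩ := res_comp c a _ rfl K
  exact hP.iso e.symm (hK T _ _ b (by rw [RingHom.comp_assoc, hab]) K)

lemma DD.split (x y : C) (hxy : x * y = 0)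
    (h1 : DD f ((Ideal.Quotient.mk (Ideal.span {x})).comp g))
    (h2 : DD f ((Ideal.Quotient.mk (Ideal.span {y})).comp g)) : DD f g := fun _ hP hK =>
  cover_split x y hxy hP (h1.pull _ hP hK) (h2.pull _ hP hK)

lemma DD.blow (x y : C) (h1 : DD f ((blowMap x y).comp g))
    (h2 : DD f ((blowMap y x).comp g)) : DD f g := fun _ hP hK =>
  cover_blow x y hP (h1.pull _ hP hK) (h2.pull _ hP hK)

lemma DD.root (p : Polynomial C) (hp : p.Monic) (hd : 1 ≤ p.natDegree)
    (h : DD f ((AdjoinRoot.of p).comp g)) : DD f g := fun P hP hK => by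
  rcases subsingleton_or_nontrivial C with hC | hC
  · exact Desc.retract (RingHom.id C) id (fun _ _ => rfl) (fun _ _ => rfl) rfl P hP
      (hK C _ (RingHom.id C) ⟨⟨⟨fun _ => 1, rfl⟩, fun _ _ => Subsingleton.elim _ _⟩,
        Subsingleton.elim _ _, fun _ _ => Subsingleton.elim _ _⟩
        (by ext; exact Subsingleton.elim _ _))
  refine Desc.retract (AdjoinRoot.of p) (fun z => (AdjoinRoot.modByMonicHom hp z).coeff 0)
    (fun x y => by simp) (fun r s => ?_) ?_ P hP (h.pull _ hP hK)
  · have : AdjoinRoot.of p r * s = r • s := by rw [Algebra.smul_def]; rfl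
    rw [this, map_smul, Polynomial.coeff_smul, smul_eq_mul]
  · have : (1 : AdjoinRoot p) = AdjoinRoot.mk p 1 := by simp
    rw [this, AdjoinRoot.modByMonicHom_mk, (Polynomial.modByMonic_eq_self_iff hp).2]
    · simp
    · rw [Polynomial.degree_one, Polynomial.degree_eq_natDegree hp.ne_zero]
      exact_mod_cast hd
end

/-- formal terms -/
inductive Tm (R : Type u) : Type u
  | c (r : R)
  | add (x y : Tm R)
  | mul (x y : Tm R)
  | v (x : Tm R)
  | quot (x y : Tm R)
  | root (n : ℕ) (a : Fin (n + 1) → Tm R)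

namespace Tm

/-- the rank of a term -/
def rank {R : Type u} : Tm R → ℕ
  | c _ => 0
  | add x y => max x.rank y.rank
  | mul x y => max x.rank y.rank
  | v x => x.rank + 1
  | quot x y => max x.rank y.rank
  | root _ a => Finset.univ.sup fun i => (a i).rank

variable {R : Type u} [CommRing R]

abbrev Lam (R : Type u) [CommRing R] := MvPolynomial (Tm R) R

noncomputable def ev : Tm R → Lam R
  | c r => MvPolynomial.C r
  | add x y => x.ev + y.ev
  | mul x y => x.ev * y.ev
  | v x => MvPolynomial.X x
  | quot _ _ => 0
  | root _ _ => 0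

lemma ev_surj : Function.Surjective (ev (R := R)) := by
  intro p
  induction p using MvPolynomial.induction_on with
  | C r => exact ⟨c r, rfl⟩
  | add p q hp hq =>
    obtain ⟨x, rfl⟩ := hp
    obtain ⟨y, rfl⟩ := hq
    exact ⟨add x y, rfl⟩
  | mul_X p n hp =>
    obtain ⟨x, rfl⟩ := hp
    exact ⟨mul x (v n), rfl⟩

lemma ev_congr {C : Type u} [CommRing C] (φ ψ : Lam R →+* C)
    (hC : φ.comp MvPolynomial.C = ψ.comp MvPolynomial.C) (x : Tm R)
    (h : ∀ y : Tm R, y.rank < x.rank → φ (MvPolynomial.X y) = ψ (MvPolynomial.X y)) :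
    φ x.ev = ψ x.ev := by
  induction x with
  | c r => exact RingHom.congr_fun hC r
  | add x y hx hy =>
    simp only [ev, map_add]
    rw [hx fun z hz => h z (lt_max_of_lt_left hz), hy fun z hz => h z (lt_max_of_lt_right hz)]
  | mul x y hx hy =>
    simp only [ev, map_mul]
    rw [hx fun z hz => h z (lt_max_of_lt_left hz), hy fun z hz => h z (lt_max_of_lt_right hz)]
  | v x => exact h x (Nat.lt_succ_self _)
  | quot => simp [ev]
  | root => simp [ev]

noncomputable def rel (ch : Tm R → Bool) : Tm R → Lam R
  | quot x y => if ch (quot x y) then ev x * MvPolynomial.X (quot x y) - ev y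
      else ev y * MvPolynomial.X (quot x y) - ev x
  | root n a => MvPolynomial.X (root n a) ^ (n + 1) +
      ∑ i : Fin (n + 1), ev (a i) * MvPolynomial.X (root n a) ^ (i : ℕ)
  | _ => 0

lemma rel_congr {C : Type u} [CommRing C] (φ ψ : Lam R →+* C)
    (hC : φ.comp MvPolynomial.C = ψ.comp MvPolynomial.C) (ch ch' : Tm R → Bool) (x : Tm R)
    (hc : ch x = ch' x) (hx : φ (MvPolynomial.X x) = ψ (MvPolynomial.X x))
    (h : ∀ y : Tm R, y.rank < x.rank → φ (MvPolynomial.X y) = ψ (MvPolynomial.X y)) :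
    φ (rel ch x) = ψ (rel ch' x) := by
  cases x with
  | quot x y =>
    simp only [rel, hc]
    have e1 := ev_congr φ ψ hC x fun z hz => h z (lt_max_of_lt_left hz)
    have e2 := ev_congr φ ψ hC y fun z hz => h z (lt_max_of_lt_right hz)
    split_ifs <;> simp [e1, e2, hx]
  | root n a =>
    have e : ∀ i, φ (a i).ev = ψ (a i).ev := fun i => ev_congr φ ψ hC _ fun z hz =>
      h z (lt_of_lt_of_le hz (Finset.le_sup (f := fun i => (a i).rank) (Finset.mem_univ i)))
    simp [rel, e, hx]
  | _ => simp [rel]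

lemma rel_ch (ch ch' : Tm R → Bool) (x : Tm R) (hc : ch x = ch' x) : rel ch x = rel ch' x :=
  rel_congr (RingHom.id _) (RingHom.id _) rfl ch ch' x hc rfl fun _ _ => rfl

end Tm
open Tm

section
variable {R S : Type u} [CommRing R] [CommRing S] (f : R →+* S)

def UDs (J : Set (Lam R)) : Prop :=
  ∀ (C : Type u) (_ : CommRing C) (φ : Lam R →+* C), (∀ j ∈ J, φ j = 0) →
    DD f (φ.comp MvPolynomial.C)

variable {f}

lemma UDs.mono {J J' : Set (Lam R)} (h : UDs f J) (hJ : J ⊆ J') : UDs f J' :=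
  fun C _ φ hφ => h C _ φ fun j hj => hφ j (hJ hj)

open Classical in
lemma UDs.step (D : Finset (Tm R)) (x : Tm R) (hx : x ∈ D) (hmax : ∀ y ∈ D, y.rank ≤ x.rank)
    (h : ∀ ch, UDs f (rel ch '' D)) (ch : Tm R → Bool) : UDs f (rel ch '' (D.erase x)) := by
  intro C _ φ hφ
  -- extension of a map to a cover
  have ext : ∀ (C' : Type u) (_ : CommRing C') (c : C →+* C') (t : C'), ∃ ψ : Lam R →+* C',
      ψ.comp MvPolynomial.C = c.comp (φ.comp MvPolynomial.C) ∧ ψ (MvPolynomial.X x) = t ∧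
      ∀ y, y ≠ x → ψ (MvPolynomial.X y) = c (φ (MvPolynomial.X y)) := by
    intro C' _ c t
    refine ⟨MvPolynomial.eval₂Hom (c.comp (φ.comp MvPolynomial.C))
      (Function.update (fun y => c (φ (MvPolynomial.X y))) x t), ?_, by simp, fun y hy => by simp [hy]⟩
    ext r; simp
  have main : ∀ (C' : Type u) (_ : CommRing C') (c : C →+* C') (ψ : Lam R →+* C'),
      ψ.comp MvPolynomial.C = c.comp (φ.comp MvPolynomial.C) →
      (∀ y, y ≠ x → ψ (MvPolynomial.X y) = c (φ (MvPolynomial.X y))) →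
      ∀ b : Bool, ψ (rel (Function.update ch x b) x) = 0 → DD f (c.comp (φ.comp MvPolynomial.C)) := by
    intro C' _ c ψ hψ hne b hb
    rw [← hψ]
    refine h (Function.update ch x b) C' _ ψ ?_
    rintro _ ⟨y, hy, rfl⟩
    by_cases hyx : y = x
    · rw [hyx]; exact hb
    · have := rel_congr ψ (c.comp φ) hψ (Function.update ch x b) ch y (by simp [hyx])
        (hne y hyx) (fun z hz => hne z fun e => by
          subst e; exact absurd (hmax y hy) (not_le.2 hz))
      rw [this, RingHom.comp_apply, hφ _ ⟨y, by simpa [hyx] using hy, rfl⟩, map_zero]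
  have hev : ∀ (C' : Type u) (_ : CommRing C') (c : C →+* C') (ψ : Lam R →+* C'),
      ψ.comp MvPolynomial.C = c.comp (φ.comp MvPolynomial.C) →
      (∀ y, y ≠ x → ψ (MvPolynomial.X y) = c (φ (MvPolynomial.X y))) →
      ∀ y : Tm R, y.rank ≤ x.rank → ψ y.ev = c (φ y.ev) := by
    intro C' _ c ψ hψ hne y hy
    exact ev_congr ψ (c.comp φ) hψ y fun z hz => hne z fun e => by
      subst e; exact absurd hy (not_le.2 hz)
  have triv : ∀ b, rel (Function.update ch x b) x = 0 → DD f (φ.comp MvPolynomial.C) := by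
    intro b hb
    have := main C _ (RingHom.id C) φ (by rw [RingHom.id_comp]) (fun _ _ => rfl) b
      (by rw [hb, map_zero])
    rwa [RingHom.id_comp] at this
  have hblow : ∀ {A : Type u} [CommRing A] (p q : A),
      blowMap p q p * Ideal.Quotient.mk _ Polynomial.X - blowMap p q q = 0 := by
    intro A _ p q
    simp only [blowMap, RingHom.comp_apply, ← map_mul, ← map_sub]
    exact Ideal.Quotient.eq_zero_iff_mem.2 (Ideal.subset_span rfl)
  match x, hmax, ext, main, hev, triv with
  | c r, _, _, _, _, triv => exact triv true rfl
  | add _ _, _, _, _, _, triv => exact triv true rfl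
  | mul _ _, _, _, _, _, triv => exact triv true rfl
  | v _, _, _, _, _, triv => exact triv true rfl
  | quot p q, hmax, ext, main, hev, triv =>
    refine DD.blow f _ (φ p.ev) (φ q.ev) ?_ ?_
    · obtain ⟨ψ, h1, h2, h3⟩ := ext _ _ (blowMap (φ p.ev) (φ q.ev))
        (Ideal.Quotient.mk _ Polynomial.X)
      refine main _ _ _ ψ h1 h3 true ?_
      simp only [rel, Function.update_self, if_true, map_sub, map_mul, h2,
        hev _ _ _ ψ h1 h3 p (le_max_left _ _), hev _ _ _ ψ h1 h3 q (le_max_right _ _)]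
      exact hblow _ _
    · obtain ⟨ψ, h1, h2, h3⟩ := ext _ _ (blowMap (φ q.ev) (φ p.ev))
        (Ideal.Quotient.mk _ Polynomial.X)
      refine main _ _ _ ψ h1 h3 false ?_
      simp only [rel, Function.update_self, Bool.false_eq_true, if_false, map_sub, map_mul, h2,
        hev _ _ _ ψ h1 h3 p (le_max_left _ _), hev _ _ _ ψ h1 h3 q (le_max_right _ _)]
      exact hblow _ _
  | root n a, hmax, ext, main, hev, triv =>
    rcases subsingleton_or_nontrivial C with hC | hC
    · exact DD.of_hom f _ ⟨⟨⟨fun _ => 1, rfl⟩, fun _ _ => Subsingleton.elim _ _⟩,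
        Subsingleton.elim _ _, fun _ _ => Subsingleton.elim _ _⟩
        (by ext; exact Subsingleton.elim _ _)
    have hlt : (∑ i : Fin (n + 1), Polynomial.C (φ (a i).ev) * Polynomial.X ^ (i : ℕ)).degree
        < ((n + 1 : ℕ) : WithBot ℕ) := by
      rw [Polynomial.degree_lt_iff_coeff_zero]
      intro m hm
      rw [Polynomial.finsetSum_coeff]
      refine Finset.sum_eq_zero fun i _ => ?_
      rw [Polynomial.coeff_C_mul_X_pow, if_neg]
      have := i.2
      omega
    refine DD.root f _ (Polynomial.X ^ (n + 1) +
      ∑ i : Fin (n + 1), Polynomial.C (φ (a i).ev) * Polynomial.X ^ (i : ℕ))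
      (Polynomial.monic_X_pow_add hlt) ?_ ?_
    · rw [Polynomial.natDegree_add_eq_left_of_degree_lt (by simpa using hlt)]
      simp
    · obtain ⟨ψ, h1, h2, h3⟩ := ext _ _ (AdjoinRoot.of _) (AdjoinRoot.root (Polynomial.X ^ (n + 1) +
        ∑ i : Fin (n + 1), Polynomial.C (φ (a i).ev) * Polynomial.X ^ (i : ℕ)))
      refine main _ _ _ ψ h1 h3 true ?_
      simp only [rel, map_add, map_pow, map_sum, map_mul, h2]
      have := AdjoinRoot.eval₂_root (Polynomial.X ^ (n + 1) +
        ∑ i : Fin (n + 1), Polynomial.C (φ (a i).ev) * Polynomial.X ^ (i : ℕ))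
      simp only [Polynomial.eval₂_add, Polynomial.eval₂_pow, Polynomial.eval₂_X,
        Polynomial.eval₂_finsetSum, Polynomial.eval₂_mul, Polynomial.eval₂_C] at this
      rw [← this]
      congr 1
      refine Finset.sum_congr rfl fun i _ => ?_
      rw [hev _ _ _ ψ h1 h3 (a i)
        (Finset.le_sup (f := fun i => (a i).rank) (Finset.mem_univ i))]

lemma UDs.fin (h0 : ¬ UDs f ∅) (D : Finset (Tm R)) : ∃ ch, ¬ UDs f (rel ch '' D) := by
  classical
  by_contra! h
  induction hn : D.card generalizing D with
  | zero =>
    rw [Finset.card_eq_zero] at hn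
    subst hn
    exact h0 (by simpa using h fun _ => true)
  | succ n ih =>
    have hne : D.Nonempty := Finset.card_pos.1 (by omega)
    obtain ⟨x, hx, hmax⟩ := D.exists_max_image rank hne
    exact ih (D.erase x) (UDs.step D x hx hmax h) (by rw [Finset.card_erase_of_mem hx]; omega)

lemma UDs.compact (h0 : ¬ UDs f ∅) :
    ∃ ch : Tm R → Bool, ∀ D : Finset (Tm R), ¬ UDs f (rel ch '' D) := by
  classical
  choose c hc using UDs.fin h0
  let F : Ultrafilter (Finset (Tm R)) := Ultrafilter.of Filter.atTop
  have hF : (F : Filter (Finset (Tm R))) ≤ Filter.atTop := Ultrafilter.of_le _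
  have hx : ∀ x : Tm R, ∃ b, ∀ᶠ D in F, c D x = b := by
    intro x
    by_cases h : ∀ᶠ D in F, c D x = true
    · exact ⟨true, h⟩
    · refine ⟨false, ?_⟩
      have := Ultrafilter.eventually_not.2 h
      simpa using this
  choose ch hch using hx
  refine ⟨ch, fun D h => ?_⟩
  have h1 : ∀ᶠ E in (F : Filter (Finset (Tm R))), ∀ x ∈ D, c E x = ch x :=
    (Filter.eventually_all_finset D).2 fun x _ => hch x
  have h2 : ∀ᶠ E in (F : Filter (Finset (Tm R))), D ≤ E := hF (Filter.eventually_ge_atTop D)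
  obtain ⟨E, hE1, hE2⟩ := (h1.and h2).exists
  refine hc E (h.mono ?_)
  rintro _ ⟨x, hx, rfl⟩
  exact ⟨x, hE2 hx, rel_ch _ _ x (hE1 x hx)⟩

theorem partII (f : R →+* S) (hfp : f.FinitePresentation)
    (H : ∀ (V : Type u) (_ : CommRing V) (_ : IsDomain V), ValuationRing V →
      (∀ (n : ℕ) (a : Fin (n + 1) → V), ∃ t, t ^ (n + 1) + ∑ i : Fin (n + 1), a i * t ^ (i : ℕ) = 0) →
      ∀ g : R →+* V, ∃ k : S →+* V, k.comp f = g) : Desc f := by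
  classical
  by_contra hnd
  have h0 : ¬ UDs f ∅ := by
    intro h
    apply hnd
    apply DD.desc
    have := h R _ (MvPolynomial.eval₂Hom (RingHom.id R) fun _ => 0) (by simp)
    convert this
    ext r; simp
  obtain ⟨ch, hch⟩ := UDs.compact h0
  obtain ⟨J, hJr, hJ⟩ := Order.IsOfFiniteCharacter.exists_maximal
    (F := {J : Set (Lam R) | ∀ J0 : Set (Lam R), J0 ⊆ J → J0.Finite → ¬ UDs f J0}) (x := Set.range (rel ch))
    (by
      intro J
      constructor
      · intro h J0 h1 _ J1 h3 h4
        exact h J1 (h3.trans h1) h4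
      · intro h J0 h1 h2
        exact h J0 h1 h2 J0 subset_rfl h2)
    (by
      intro J0 h1 h2 h3
      rw [← Set.image_univ] at h1
      choose g hg using fun x : J0 => (h1 x.2)
      have : Fintype J0 := h2.fintype
      refine hch (Finset.univ.image g) (h3.mono ?_)
      intro x hx
      exact ⟨g ⟨x, hx⟩, by simp, (hg ⟨x, hx⟩).2⟩)
  have hJN : ∀ J0 : Set (Lam R), J0 ⊆ J → J0.Finite → ¬ UDs f J0 := hJ.1
  have hout : ∀ x, x ∉ J → ∃ J0 : Set (Lam R), J0 ⊆ J ∧ J0.Finite ∧ UDs f (insert x J0) := by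
    intro x hx
    by_contra! hcon
    apply hx
    refine hJ.2 (y := insert x J) ?_ (Set.subset_insert _ _) (Set.mem_insert _ _)
    intro J0 h1 h2 h3
    refine hcon (J0 \ {x}) ?_ (h2.subset Set.sdiff_subset) (h3.mono ?_)
    · rintro y ⟨hy, hy'⟩
      exact (h1 hy).resolve_left hy'
    · intro y hy
      by_cases hyx : y = x
      · exact Or.inl hyx
      · exact Or.inr ⟨hy, hyx⟩
  have hin : ∀ x (J0 : Set (Lam R)), J0 ⊆ J → J0.Finite → (∀ (C : Type u) (_ : CommRing C) (φ : Lam R →+* C),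
      (∀ j ∈ J0, φ j = 0) → φ x = 0) → x ∈ J := by
    intro x J0 h1 h2 h3
    by_contra hx
    obtain ⟨J1, h4, h5, h6⟩ := hout x hx
    refine hJN (J0 ∪ J1) (Set.union_subset h1 h4) (h2.union h5) ?_
    intro C _ φ hφ
    refine h6 C _ φ ?_
    rintro j (rfl | hj)
    · exact h3 C _ φ fun j hj => hφ j (Or.inl hj)
    · exact hφ j (Or.inr hj)
  let I : Ideal (Lam R) :=
    { carrier := J
      zero_mem' := hin 0 ∅ (Set.empty_subset _) Set.finite_empty fun C _ φ _ => map_zero φ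
      add_mem' := fun {a b} ha hb => hin _ {a, b}
        (by rintro x (rfl | rfl) <;> assumption) (Set.toFinite _) fun C _ φ h => by
          rw [map_add, h a (by simp), h b (by simp), add_zero]
      smul_mem' := fun r a ha => hin _ {a} (by rintro x rfl; assumption) (Set.toFinite _)
        fun C _ φ h => by rw [smul_eq_mul, map_mul, h a (by simp), mul_zero] }
  have hIJ : ∀ x, x ∈ I ↔ x ∈ J := fun x => Iff.rfl
  have hprime : I.IsPrime := by
    refine Ideal.isPrime_iff.2 ⟨?_, ?_⟩
    · rw [Ideal.ne_top_iff_one]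
      intro h
      refine hJN {1} (Set.singleton_subset_iff.2 h) (Set.toFinite _) fun C _ φ hφ => ?_
      have : Subsingleton C := subsingleton_of_zero_eq_one (by rw [← hφ 1 rfl, map_one])
      exact DD.of_hom f _ ⟨⟨⟨fun _ => 1, rfl⟩, fun _ _ => Subsingleton.elim _ _⟩,
        Subsingleton.elim _ _, fun _ _ => Subsingleton.elim _ _⟩
        (by ext; exact Subsingleton.elim _ _)
    · intro x y hxy
      by_contra! hcon
      obtain ⟨J1, h11, h12, h13⟩ := hout x hcon.1
      obtain ⟨J2, h21, h22, h23⟩ := hout y hcon.2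
      refine hJN (insert (x * y) (J1 ∪ J2))
        (Set.insert_subset hxy (Set.union_subset h11 h21)) ((h12.union h22).insert _) ?_
      intro C _ φ hφ
      refine DD.split f _ (φ x) (φ y) (by rw [← map_mul]; exact hφ _ (Or.inl rfl)) ?_ ?_
      · rw [← RingHom.comp_assoc]
        refine h13 _ _ _ ?_
        rintro j (rfl | hj)
        · exact Ideal.Quotient.eq_zero_iff_mem.2 (Ideal.subset_span rfl)
        · rw [RingHom.comp_apply, hφ j (Or.inr (Or.inl hj)), map_zero]
      · rw [← RingHom.comp_assoc]
        refine h23 _ _ _ ?_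
        rintro j (rfl | hj)
        · exact Ideal.Quotient.eq_zero_iff_mem.2 (Ideal.subset_span rfl)
        · rw [RingHom.comp_apply, hφ j (Or.inr (Or.inr hj)), map_zero]
  have hrel : ∀ x, Ideal.Quotient.mk I (rel ch x) = 0 := fun x =>
    Ideal.Quotient.eq_zero_iff_mem.2 (hJr ⟨x, rfl⟩)
  have hsurj : ∀ z : Lam R ⧸ I, ∃ x : Tm R, Ideal.Quotient.mk I x.ev = z := fun z => by
    obtain ⟨y, rfl⟩ := Ideal.Quotient.mk_surjective z
    obtain ⟨x, rfl⟩ := ev_surj y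
    exact ⟨x, rfl⟩
  have hval : ValuationRing (Lam R ⧸ I) := by
    refine ValuationRing.iff_dvd_total.2 ⟨fun a b => ?_⟩
    obtain ⟨x, rfl⟩ := hsurj a
    obtain ⟨y, rfl⟩ := hsurj b
    have := hrel (quot x y)
    simp only [rel] at this
    split_ifs at this with hb
    · left
      rw [map_sub, map_mul, sub_eq_zero] at this
      exact ⟨_, this.symm⟩
    · right
      rw [map_sub, map_mul, sub_eq_zero] at this
      exact ⟨_, this.symm⟩
  obtain ⟨k, hk⟩ := H (Lam R ⧸ I) _ inferInstance hval (by
    intro n a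
    choose b hb using fun i => hsurj (a i)
    refine ⟨Ideal.Quotient.mk I (MvPolynomial.X (root n b)), ?_⟩
    have := hrel (root n b)
    simpa [rel, hb] using this) ((Ideal.Quotient.mk I).comp MvPolynomial.C)
  algebraize [f]
  obtain ⟨n, π, hπ, ⟨G, hG⟩⟩ := (hfp : Algebra.FinitePresentation R S)
  choose w hw using fun i => Ideal.Quotient.mk_surjective (I := I) (k (π (MvPolynomial.X i)))
  have hcomp : (Ideal.Quotient.mk I).comp
      (MvPolynomial.eval₂Hom (MvPolynomial.C : R →+* Lam R) w) = k.comp π.toRingHom := by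
    refine MvPolynomial.ringHom_ext (fun r => ?_) (fun i => ?_)
    · have := RingHom.congr_fun hk r
      simp only [RingHom.comp_apply, MvPolynomial.coe_eval₂Hom, MvPolynomial.eval₂_C] at this ⊢
      rw [← this]
      congr 1
      exact (π.commutes r).symm
    · simp [hw]
  refine hJN ((MvPolynomial.eval₂Hom (MvPolynomial.C : R →+* Lam R) w) '' G) ?_
    (G.finite_toSet.image _) ?_
  · rintro _ ⟨x, hx, rfl⟩
    rw [← hIJ, ← Ideal.Quotient.eq_zero_iff_mem]
    have := RingHom.congr_fun hcomp x
    rw [RingHom.comp_apply] at this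
    rw [this]
    have hx' : x ∈ RingHom.ker π.toRingHom := by rw [← hG]; exact Ideal.subset_span hx
    rw [RingHom.comp_apply, (RingHom.mem_ker).1 hx', map_zero]
  · intro C _ φ hφ
    let ψ := φ.comp (MvPolynomial.eval₂Hom (MvPolynomial.C : R →+* Lam R) w)
    have hker : RingHom.ker π.toRingHom ≤ RingHom.ker ψ := by
      rw [← hG, Ideal.span_le]
      intro x hx
      exact hφ _ ⟨x, hx, rfl⟩
    refine DD.of_hom f _ (π.toRingHom.liftOfRightInverse (Function.surjInv hπ)
      (Function.rightInverse_surjInv hπ) ⟨ψ, hker⟩) ?_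
    ext r
    have := RingHom.liftOfRightInverse_comp_apply π.toRingHom (Function.surjInv hπ)
      (Function.rightInverse_surjInv hπ) ⟨ψ, hker⟩ (MvPolynomial.C r)
    have e : π.toRingHom (MvPolynomial.C r) = f r := π.commutes r
    rw [e] at this
    rw [RingHom.comp_apply, this]
    simp [ψ]

end
end UD

namespace UD
open Polynomial

section onevar
variable {K L : Type u} [Field K] [Field L] [Algebra K L] [IsAlgClosed K]
  {Γ : Type*} [LinearOrderedCommGroupWithZero Γ] (v : Valuation L Γ)

local notation "ι" => algebraMap K L

lemma eval_splits (p : K[X]) (z : L) :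
    aeval z p = ι p.leadingCoeff * (p.roots.map fun θ => z - ι θ).prod := by
  have h := (IsAlgClosed.splits p).eq_prod_roots
  conv_lhs => rw [h]
  rw [map_mul, aeval_C, map_multiset_prod, Multiset.map_map]
  simp

lemma v_eval_eq (p : K[X]) (z z' : L) (h : ∀ θ ∈ p.roots, v (z - ι θ) = v (z' - ι θ)) :
    v (aeval z p) = v (aeval z' p) := by
  rw [eval_splits, eval_splits, map_mul, map_mul, map_multiset_prod, map_multiset_prod,
    Multiset.map_map, Multiset.map_map]
  congr 2
  exact Multiset.map_congr rfl h

/-- `δ` lies on the same side of `β` as `γ` -/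
def Side (γ δ β : Γ) : Prop := (β < γ → β < δ) ∧ (γ < β → δ < β)

lemma prod_side (γ : Γ) (a0 : K) (hγ : ∀ b : K, v (ι b) ≠ γ) (ρ : Multiset K) :
    ∃ e : K, e ≠ 0 ∧ ∃ m : ℕ, ∀ z : L, (∀ θ ∈ ρ, Side γ (v z) (v (ι (a0 - θ)))) →
      v ((ρ.map fun θ => ι a0 + z - ι θ).prod) = v (ι e) * v z ^ m := by
  induction ρ using Multiset.induction with
  | empty => exact ⟨1, one_ne_zero, 0, fun z _ => by simp⟩
  | cons θ ρ ih =>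
    obtain ⟨e, he, m, h⟩ := ih
    have hz : ∀ z : L, ι a0 + z - ι θ = ι (a0 - θ) + z := fun z => by rw [map_sub]; ring
    rcases lt_or_gt_of_ne (hγ (a0 - θ)) with hlt | hgt
    · refine ⟨e, he, m + 1, fun z hs => ?_⟩
      rw [Multiset.map_cons, Multiset.prod_cons, map_mul,
        h z fun θ' h' => hs θ' (Multiset.mem_cons_of_mem h'), hz,
        v.map_add_eq_of_lt_right ((hs θ (Multiset.mem_cons_self _ _)).1 hlt), pow_succ]
      ac_rfl
    · refine ⟨(a0 - θ) * e, mul_ne_zero (fun h0 => ?_) he, m, fun z hs => ?_⟩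
      · rw [h0, map_zero, map_zero] at hgt
        exact not_lt_zero hgt
      · rw [Multiset.map_cons, Multiset.prod_cons, map_mul,
          h z fun θ' h' => hs θ' (Multiset.mem_cons_of_mem h'), hz,
          v.map_add_eq_of_lt_left ((hs θ (Multiset.mem_cons_self _ _)).2 hgt), map_mul, map_mul,
          mul_assoc]

lemma pair_side (γ : Γ) (hγ0 : γ ≠ 0) (hγ : ∀ b : K, v (ι b) ≠ γ) (e e' : K) (he : e ≠ 0)
    (he' : e' ≠ 0) (m n : ℕ) (h : v (ι e) * γ ^ m ≤ v (ι e') * γ ^ n) :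
    ∃ b : K, ∀ δ : Γ, δ ≠ 0 → Side γ δ (v (ι b)) → v (ι e) * δ ^ m ≤ v (ι e') * δ ^ n := by
  have hv : ∀ a : K, a ≠ 0 → 0 < v (ι a) := fun a ha => by
    rw [zero_lt_iff, Valuation.ne_zero_iff]; simpa using ha
  have hdiv : ∀ a b : K, v (ι (a / b)) = v (ι a) / v (ι b) := fun a b => by
    rw [map_div₀, map_div₀]
  rcases lt_trichotomy m n with hmn | hmn | hmn
  · obtain ⟨k, rfl⟩ := Nat.exists_eq_add_of_lt hmn
    obtain ⟨b, hb⟩ := IsAlgClosed.exists_pow_nat_eq (e / e') (Nat.succ_pos k)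
    have key : ∀ δ : Γ, δ ≠ 0 → (v (ι e) * δ ^ m ≤ v (ι e') * δ ^ (m + k + 1) ↔
        v (ι b) ≤ δ) := by
      intro δ hδ
      rw [← pow_le_pow_iff_left₀ (a := v (ι b)) (b := δ) (zero_le) (zero_le) (Nat.succ_ne_zero k), ← map_pow, ← map_pow, hb,
        hdiv, div_le_iff₀ (hv _ he'), show m + k + 1 = k.succ + m by omega, pow_add, ← mul_assoc,
        mul_le_mul_iff_left₀ (pow_pos (zero_lt_iff.2 hδ) m), mul_comm (v (ι e'))]
    refine ⟨b, fun δ hδ hs => (key δ hδ).2 (hs.1 (lt_of_le_of_ne ((key γ hγ0).1 h) (hγ b))).le⟩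
  · subst hmn
    refine ⟨0, fun δ hδ _ => ?_⟩
    rw [mul_le_mul_iff_left₀ (pow_pos (zero_lt_iff.2 hγ0) m)] at h
    exact mul_le_mul_left h _
  · obtain ⟨k, rfl⟩ := Nat.exists_eq_add_of_lt hmn
    obtain ⟨b, hb⟩ := IsAlgClosed.exists_pow_nat_eq (e' / e) (Nat.succ_pos k)
    have key : ∀ δ : Γ, δ ≠ 0 → (v (ι e) * δ ^ (n + k + 1) ≤ v (ι e') * δ ^ n ↔
        δ ≤ v (ι b)) := by
      intro δ hδ
      rw [← pow_le_pow_iff_left₀ (a := δ) (b := v (ι b)) (zero_le) (zero_le) (Nat.succ_ne_zero k), ← map_pow, ← map_pow, hb,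
        hdiv, le_div_iff₀ (hv _ he), show n + k + 1 = k.succ + n by omega, pow_add, ← mul_assoc,
        mul_le_mul_iff_left₀ (pow_pos (zero_lt_iff.2 hδ) n), mul_comm (v (ι e))]
    refine ⟨b, fun δ hδ hs => (key δ hδ).2
      (hs.2 (lt_of_le_of_ne ((key γ hγ0).1 h) (hγ b).symm)).le⟩

lemma exists_side (γ : Γ) (hγ0 : γ ≠ 0) (hnt : ∃ c : K, 1 < v (ι c))
    (B : Finset K) : ∃ c : K, c ≠ 0 ∧ ∀ b ∈ B, Side γ (v (ι c)) (v (ι b)) := by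
  classical
  obtain ⟨c, hc⟩ := hnt
  have hv : ∀ a : K, a ≠ 0 → 0 < v (ι a) := fun a ha => by
    rw [zero_lt_iff, Valuation.ne_zero_iff]; simpa using ha
  have hv' : ∀ a : K, 0 < v (ι a) → a ≠ 0 := fun a ha h0 => by simp [h0] at ha
  have hc0 : c ≠ 0 := hv' c (zero_lt_one.trans hc)
  obtain ⟨l, hl, hlmax⟩ := ((insert 0 B).filter fun b => v (ι b) < γ).exists_max_image
    (fun b => v (ι b)) ⟨0, by simp [zero_lt_iff, hγ0]⟩
  have hl' : ∀ b ∈ B, v (ι b) < γ → v (ι b) ≤ v (ι l) := fun b hb h =>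
    hlmax b (by simp [hb, h])
  have hlγ : v (ι l) < γ := (Finset.mem_filter.1 hl).2
  suffices h : ∃ d : K, v (ι l) < v (ι d) ∧ ∀ b ∈ B, γ < v (ι b) → v (ι d) < v (ι b) by
    obtain ⟨d, h1, h2⟩ := h
    exact ⟨d, hv' d (lt_of_le_of_lt zero_le h1), fun b hb => ⟨fun h => (hl' b hb h).trans_lt h1, h2 b hb⟩⟩
  by_cases hU : (B.filter fun b => γ < v (ι b)).Nonempty
  · obtain ⟨w, hw, hwmin⟩ := (B.filter fun b => γ < v (ι b)).exists_min_image
      (fun b => v (ι b)) hU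
    have hw' : ∀ b ∈ B, γ < v (ι b) → v (ι w) ≤ v (ι b) := fun b hb h =>
      hwmin b (by simp [hb, h])
    have hwγ : γ < v (ι w) := (Finset.mem_filter.1 hw).2
    suffices h : ∃ d : K, v (ι l) < v (ι d) ∧ v (ι d) < v (ι w) by
      obtain ⟨d, h1, h2⟩ := h
      exact ⟨d, h1, fun b hb h => h2.trans_le (hw' b hb h)⟩
    have hw0 : 0 < v (ι w) := (zero_lt_iff.2 hγ0).trans hwγ
    by_cases h0 : l = 0
    · refine ⟨w / c, ?_, ?_⟩
      · rw [h0, map_zero, map_zero]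
        exact hv _ (div_ne_zero (hv' w hw0) hc0)
      · rw [map_div₀, map_div₀, div_lt_iff₀ (hv c hc0)]
        exact lt_mul_of_one_lt_right hw0 hc
    · obtain ⟨d, hd⟩ := IsAlgClosed.exists_pow_nat_eq (l * w) (Nat.succ_pos 1)
      have hd' : v (ι d) ^ 2 = v (ι l) * v (ι w) := by
        rw [← map_pow, ← map_pow, hd, map_mul, map_mul]
      refine ⟨d, ?_, ?_⟩
      · refine lt_of_pow_lt_pow_left₀ 2 zero_le ?_
        rw [hd', pow_two]
        exact mul_lt_mul_of_pos_left (hlγ.trans hwγ) (hv l h0)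
      · refine lt_of_pow_lt_pow_left₀ 2 zero_le ?_
        rw [hd', pow_two]
        exact mul_lt_mul_of_pos_right (hlγ.trans hwγ) hw0
  · have hU' : ∀ b ∈ B, γ < v (ι b) → False := fun b hb h => hU ⟨b, by simp [hb, h]⟩
    by_cases h0 : l = 0
    · exact ⟨1, by simp [h0], fun b hb h => (hU' b hb h).elim⟩
    · refine ⟨l * c, ?_, fun b hb h => (hU' b hb h).elim⟩
      rw [map_mul, map_mul]
      exact lt_mul_of_one_lt_right (hv l h0) hc

lemma exists_unit_diff (B : Finset K) (hB : ∀ b ∈ B, v (ι b) ≤ 1) (hne : B.Nonempty) :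
    ∃ a : K, v (ι a) ≤ 1 ∧ ∀ b ∈ B, v (ι (a - b)) = 1 := by
  classical
  have hmon : (∏ b ∈ B, (X - C b)).Monic := monic_prod_of_monic _ _ fun b _ => monic_X_sub_C b
  have hdeg : (∏ b ∈ B, (X - C b)).natDegree = B.card := by
    rw [natDegree_prod_of_monic _ _ fun b _ => monic_X_sub_C b]; simp
  obtain ⟨a, ha⟩ := IsAlgClosed.exists_root ((∏ b ∈ B, (X - C b)) - 1) (by
    rw [degree_sub_eq_left_of_degree_lt]
    · rw [degree_eq_natDegree hmon.ne_zero, hdeg]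
      exact_mod_cast hne.card_pos.ne'
    · rw [degree_one, degree_eq_natDegree hmon.ne_zero, hdeg]
      exact_mod_cast hne.card_pos)
  have hprod : ∏ b ∈ B, v (ι (a - b)) = 1 := by
    rw [IsRoot.def, eval_sub, eval_prod, eval_one, sub_eq_zero] at ha
    rw [← map_prod, ← map_prod]
    simp only [eval_sub, eval_X, eval_C] at ha
    rw [ha, map_one, map_one]
  have hle : v (ι a) ≤ 1 := by
    by_contra! hgt
    have h : ∀ b ∈ B, 1 < v (ι (a - b)) := fun b hb => by
      rw [map_sub, v.map_sub_eq_of_lt_left ((hB b hb).trans_lt hgt)]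
      exact hgt
    have : ∏ b ∈ B, (1 : Γ) < ∏ b ∈ B, v (ι (a - b)) :=
      Finset.prod_lt_prod_of_nonempty (fun _ _ => zero_lt_one) h hne
    rw [hprod, Finset.prod_const_one] at this
    exact lt_irrefl _ this
  refine ⟨a, hle, ?_⟩
  have hle' : ∀ b ∈ B, v (ι (a - b)) ≤ 1 := fun b hb => by
    rw [map_sub]
    exact (v.map_sub _ _).trans (max_le hle (hB b hb))
  intro b hb
  refine le_antisymm (hle' b hb) ?_
  rw [← hprod, ← Finset.mul_prod_erase B _ hb]
  exact mul_le_of_le_one_right' (Finset.prod_le_one' fun c hc => hle' c (Finset.mem_of_mem_erase hc))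

lemma onevar (x : L) (hx : ∀ a : K, ι a ≠ x) (hnt : ∃ c : K, 1 < v (ι c))
    (T : Finset (K[X] × K[X])) (hT : ∀ t ∈ T, t.2 ≠ 0 ∧ v (aeval x t.1) ≤ v (aeval x t.2)) :
    ∃ a : K, ∀ t ∈ T, t.2.eval a ≠ 0 ∧ v (ι (t.1.eval a)) ≤ v (ι (t.2.eval a)) := by
  classical
  have hx0 : ∀ a : K, v (x - ι a) ≠ 0 := fun a => by
    rw [Valuation.ne_zero_iff, sub_ne_zero]; exact (hx a).symm
  have hev : ∀ (p : K[X]) (a : K), aeval (ι a) p = ι (p.eval a) := fun p a => by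
    rw [aeval_algebraMap_apply]; simp
  by_cases hcase : ∃ a0 : K, ∀ b : K, v (ι b) ≠ v (x - ι a0)
  · obtain ⟨a0, hγ⟩ := hcase
    have hp : ∀ p : K[X], p ≠ 0 → ∃ e : K, e ≠ 0 ∧ ∃ m : ℕ, ∀ z : L,
        (∀ θ ∈ p.roots, Side (v (x - ι a0)) (v z) (v (ι (a0 - θ)))) →
        v (aeval (ι a0 + z) p) = v (ι e) * v z ^ m := by
      intro p hp
      obtain ⟨e, he, m, h⟩ := prod_side v _ a0 hγ p.roots
      refine ⟨p.leadingCoeff * e, mul_ne_zero (by simpa using hp) he, m, fun z hz => ?_⟩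
      rw [eval_splits, map_mul, h z hz, map_mul, map_mul, mul_assoc]
    have hself : ∀ β : Γ, Side (v (x - ι a0)) (v (x - ι a0)) β := fun β => ⟨id, id⟩
    have hb : ∀ t : K[X] × K[X], ∃ b : K, t ∈ T → ∀ z : L, v z ≠ 0 →
        (∀ θ ∈ t.1.roots, Side (v (x - ι a0)) (v z) (v (ι (a0 - θ)))) →
        (∀ θ ∈ t.2.roots, Side (v (x - ι a0)) (v z) (v (ι (a0 - θ)))) →
        Side (v (x - ι a0)) (v z) (v (ι b)) →
        v (aeval (ι a0 + z) t.2) ≠ 0 ∧ v (aeval (ι a0 + z) t.1) ≤ v (aeval (ι a0 + z) t.2) := by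
      intro t
      by_cases ht : t ∈ T
      · obtain ⟨e2, he2, n, h2⟩ := hp t.2 (hT t ht).1
        have hne : ∀ z : L, v z ≠ 0 → v (ι e2) * v z ^ n ≠ 0 := fun z hz =>
          mul_ne_zero (by rw [Valuation.ne_zero_iff]; simpa using he2) (pow_ne_zero _ hz)
        by_cases h0 : t.1 = 0
        · refine ⟨0, fun _ z hz _ hs2 _ => ?_⟩
          rw [h2 z hs2, h0, map_zero, map_zero]
          exact ⟨hne z hz, zero_le⟩
        · obtain ⟨e1, he1, m, h1⟩ := hp t.1 h0
          have := (hT t ht).2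
          rw [show x = ι a0 + (x - ι a0) by ring, h1 _ fun θ _ => hself _,
            h2 _ fun θ _ => hself _] at this
          obtain ⟨b, hb⟩ := pair_side v _ (hx0 a0) hγ e1 e2 he1 he2 m n this
          refine ⟨b, fun _ z hz hs1 hs2 hs => ?_⟩
          rw [h1 z hs1, h2 z hs2]
          exact ⟨hne z hz, hb _ hz hs⟩
      · exact ⟨0, fun h => (ht h).elim⟩
    choose b hb using hb
    obtain ⟨c, hc0, hc⟩ := exists_side v _ (hx0 a0) hnt
      (T.image b ∪ (T.biUnion fun t => (t.1.roots + t.2.roots).toFinset.image fun θ => a0 - θ))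
    refine ⟨a0 + c, fun t ht => ?_⟩
    have := hb t ht (ι c) (by rw [Valuation.ne_zero_iff]; simpa using hc0)
      (fun θ hθ => hc _ (Finset.mem_union_right _ (Finset.mem_biUnion.2 ⟨t, ht,
        Finset.mem_image.2 ⟨θ, by rw [Multiset.mem_toFinset, Multiset.mem_add]; exact Or.inl hθ, rfl⟩⟩)))
      (fun θ hθ => hc _ (Finset.mem_union_right _ (Finset.mem_biUnion.2 ⟨t, ht,
        Finset.mem_image.2 ⟨θ, by rw [Multiset.mem_toFinset, Multiset.mem_add]; exact Or.inr hθ, rfl⟩⟩)))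
      (hc _ (Finset.mem_union_left _ (Finset.mem_image_of_mem b ht)))
    rw [← map_add, hev, hev] at this
    refine ⟨fun h0 => this.1 (by rw [h0, map_zero, map_zero]), this.2⟩
  · push Not at hcase
    let Θ : Finset K := insert 0 (T.biUnion fun t => (t.1.roots + t.2.roots).toFinset)
    obtain ⟨a0, ha0, hmin⟩ := Θ.exists_min_image (fun θ => v (x - ι θ)) ⟨0, by simp [Θ]⟩
    obtain ⟨c, hc⟩ := hcase a0
    have hvc : 0 < v (ι c) := by rw [hc]; exact zero_lt_iff.2 (hx0 a0)
    have hc0 : c ≠ 0 := fun h => by simp [h] at hvc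
    obtain ⟨a', ha', hu⟩ := exists_unit_diff v
      ((Θ.image fun θ => (θ - a0) / c).filter fun b => v (ι b) ≤ 1)
      (fun b hb => (Finset.mem_filter.1 hb).2) ⟨0, by
        rw [Finset.mem_filter, Finset.mem_image]
        exact ⟨⟨a0, ha0, by simp⟩, by simp⟩⟩
    have key : ∀ θ ∈ Θ, v (ι (a0 + c * a') - ι θ) = v (x - ι θ) := by
      intro θ hθ
      have hge := hmin θ hθ
      have e1 : x - ι θ = (x - ι a0) + ι (a0 - θ) := by rw [map_sub]; ring
      rcases le_or_gt (v (ι (a0 - θ))) (v (ι c)) with hle | hgt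
      · have h1 : v (x - ι θ) = v (ι c) := by
          refine le_antisymm ?_ (hc ▸ hge)
          rw [e1]
          exact (v.map_add _ _).trans (max_le hc.ge hle)
        have h2 : v (ι ((θ - a0) / c)) ≤ 1 := by
          rw [map_div₀, map_div₀, div_le_iff₀ hvc, one_mul, ← neg_sub, map_neg, Valuation.map_neg]
          exact hle
        have h3 := hu ((θ - a0) / c) (Finset.mem_filter.2 ⟨Finset.mem_image_of_mem _ hθ, h2⟩)
        rw [h1, ← map_sub, show a0 + c * a' - θ = c * (a' - (θ - a0) / c) by field_simp; ring,
          map_mul, map_mul, h3, mul_one]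
      · have h1 : v (x - ι θ) = v (ι (a0 - θ)) := by
          rw [e1]
          exact v.map_add_eq_of_lt_right (hc ▸ hgt)
        rw [h1, ← map_sub, show a0 + c * a' - θ = c * a' + (a0 - θ) by ring, map_add]
        apply v.map_add_eq_of_lt_right
        refine lt_of_le_of_lt ?_ hgt
        rw [map_mul, map_mul]
        exact mul_le_of_le_one_right' ha'
    refine ⟨a0 + c * a', fun t ht => ?_⟩
    have h1 := v_eval_eq v t.1 (ι (a0 + c * a')) x fun θ hθ => key θ
      (Finset.mem_insert_of_mem (Finset.mem_biUnion.2 ⟨t, ht, by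
        rw [Multiset.mem_toFinset, Multiset.mem_add]; exact Or.inl hθ⟩))
    have h2 := v_eval_eq v t.2 (ι (a0 + c * a')) x fun θ hθ => key θ
      (Finset.mem_insert_of_mem (Finset.mem_biUnion.2 ⟨t, ht, by
        rw [Multiset.mem_toFinset, Multiset.mem_add]; exact Or.inr hθ⟩))
    rw [hev] at h1 h2
    rw [h1, h2]
    refine ⟨fun h0 => ?_, (hT t ht).2⟩
    rw [h0, map_zero, map_zero, eval_splits, map_mul, map_multiset_prod, Multiset.map_map] at h2
    refine mul_ne_zero ?_ ?_ h2.symm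
    · rw [Valuation.ne_zero_iff]; simpa using (hT t ht).1
    · rw [Ne, Multiset.prod_eq_zero_iff]
      simp only [Multiset.mem_map, Function.comp_apply, not_exists, not_and]
      exact fun θ _ => hx0 θ
end onevar
end UD

namespace UD
open Polynomial

section intcrit
variable {F L : Type u} [Field F] [Field L] [Algebra F L] (W : ValuationSubring L)

abbrev AF (F : Type u) [Field F] [Algebra F L] : ValuationSubring F := W.comap (algebraMap F L)


lemma int_crit (z : L) (h : ∀ V : ValuationSubring L,
    (∀ c : F, algebraMap F L c ∈ W → algebraMap F L c ∈ V) → z ∈ V) :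
    IsIntegral (AF W F) z := by
  let s : Set L := algebraMap F L '' {c | algebraMap F L c ∈ W}
  have h1 : z ∈ (integralClosure (Subring.closure s) L).toSubring := by
    rw [← iInf_valuationSubring_superset, Subring.mem_iInf]
    rintro ⟨V, hV⟩
    refine h V fun c hc => hV ⟨c, hc, rfl⟩
  have h2 : IsIntegral (Subring.closure s) z := h1
  obtain ⟨p, hp, hz⟩ := h2
  let q : L[X] := p.map (algebraMap _ L)
  have hq : q ∈ lifts (algebraMap (AF W F) L) := by
    rw [lifts_iff_coeff_lifts]
    intro n
    rw [coeff_map]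
    have : ((p.coeff n : Subring.closure s) : L) ∈ (algebraMap (AF W F) L).range := by
      refine (Subring.closure_le (t := (algebraMap (AF W F) L).range)).2 ?_ (p.coeff n).2
      rintro _ ⟨c, hc, rfl⟩
      exact ⟨⟨c, hc⟩, rfl⟩
    exact this
  obtain ⟨r, hr, -, hm⟩ := lifts_and_natDegree_eq_and_monic hq (hp.map _)
  refine ⟨r, hm, ?_⟩
  rw [← Polynomial.eval_map, hr, Polynomial.eval_map]
  exact hz

lemma good_coeff {b : L} (hb : IsIntegral (AF W F) b) (i : ℕ) :
    algebraMap F L ((minpoly F b).coeff i) ∈ W := by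
  rw [minpoly.isIntegrallyClosed_eq_field_fractions' F hb, coeff_map]
  exact ((minpoly (AF W F) b).coeff i).2

lemma lemmaC (y : L) (hy : y ∈ W) (N : ℕ) (a : ℕ → F) (ha : ∀ j, algebraMap F L (a j) ∈ W)
    (h0 : ∑ j ∈ Finset.range N, algebraMap F L (a j) * y ^ j = 0)
    (hu : ∃ j < N, W.valuation (algebraMap F L (a j)) = 1) :
    ∃ b s : L, IsIntegral (AF W F) b ∧ IsIntegral (AF W F) s ∧ W.valuation s = 1 ∧ y * s = b := by
  classical
  by_cases hy0 : y = 0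
  · exact ⟨0, 1, isIntegral_zero, isIntegral_one, map_one _, by simp [hy0]⟩
  let P := (Finset.range N).filter fun j => W.valuation (algebraMap F L (a j)) = 1
  have hP : P.Nonempty := by
    obtain ⟨j, hj, hj'⟩ := hu
    exact ⟨j, Finset.mem_filter.2 ⟨Finset.mem_range.2 hj, hj'⟩⟩
  obtain ⟨hiN, hi⟩ := Finset.mem_filter.1 (P.max'_mem hP)
  have hmax : ∀ j, P.max' hP < j → j < N → W.valuation (algebraMap F L (a j)) < 1 := by
    intro j hj hjN
    refine lt_of_le_of_ne ((W.valuation_le_one_iff _).2 (ha j)) fun h => ?_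
    exact absurd (P.le_max' j (Finset.mem_filter.2 ⟨Finset.mem_range.2 hjN, h⟩)) (not_le.2 hj)
  generalize P.max' hP = i at *
  rw [Finset.mem_range] at hiN
  obtain ⟨M, rfl⟩ : ∃ M, N = i + (M + 1) := ⟨N - i - 1, by omega⟩
  set s : L := ∑ j ∈ Finset.range (M + 1), algebraMap F L (a (i + j)) * y ^ j with hs
  have hsum : ∑ j ∈ Finset.range i, algebraMap F L (a j) * y ^ j + y ^ i * s = 0 := by
    rw [← h0, Finset.sum_range_add, hs, Finset.mul_sum]
    congr 1
    refine Finset.sum_congr rfl fun j _ => by ring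
  have key : ∀ V : ValuationSubring L,
    (∀ c : F, algebraMap F L c ∈ W → algebraMap F L c ∈ V) → s ∈ V ∧ y * s ∈ V := by
    intro V hV
    rcases V.mem_or_inv_mem y with hyV | hyV
    · have : s ∈ V := sum_mem fun j _ => mul_mem (hV _ (ha _)) (pow_mem hyV _)
      exact ⟨this, mul_mem hyV this⟩
    · have e1 : y * s = - ∑ j ∈ Finset.range i, algebraMap F L (a j) * (y⁻¹) ^ (i - 1 - j) := by
        have : y ^ i * s = - ∑ j ∈ Finset.range i, algebraMap F L (a j) * y ^ j := by
          linear_combination hsum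
        have hyi : y ^ i ≠ 0 := pow_ne_zero _ hy0
        apply mul_left_cancel₀ hyi
        rw [mul_left_comm, this, mul_neg, mul_neg, Finset.mul_sum, Finset.mul_sum]
        congr 1
        refine Finset.sum_congr rfl fun j hj => ?_
        rw [Finset.mem_range] at hj
        obtain ⟨m, rfl⟩ : ∃ m, i = j + m + 1 := ⟨i - j - 1, by omega⟩
        rw [show j + m + 1 - 1 - j = m by omega, inv_pow]
        field_simp
        ring
      have h1 : y * s ∈ V := by
        rw [e1]
        exact neg_mem (sum_mem fun j _ => mul_mem (hV _ (ha _)) (pow_mem hyV _))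
      refine ⟨?_, h1⟩
      have := mul_mem hyV h1
      rwa [inv_mul_cancel_left₀ hy0] at this
  refine ⟨y * s, s, int_crit W _ fun V hV => (key V hV).2, int_crit W _ fun V hV => (key V hV).1,
    ?_, rfl⟩
  rw [hs, Finset.sum_range_succ']
  have : W.valuation (algebraMap F L (a (i + 0)) * y ^ 0) = 1 := by simpa using hi
  rw [Valuation.map_add_eq_of_lt_right _ ?_, this]
  rw [this]
  apply Valuation.map_sum_lt _ one_ne_zero
  intro j hj
  rw [map_mul]
  exact mul_lt_one_of_lt_of_le (hmax _ (by omega) (by have := Finset.mem_range.1 hj; omega))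
    ((W.valuation_le_one_iff _).2 (pow_mem hy _))

lemma lemmaC2 [Algebra.IsAlgebraic F L] (y : L) (hy : y ∈ W) :
    ∃ b s : L, IsIntegral (AF W F) b ∧ IsIntegral (AF W F) s ∧ W.valuation s = 1 ∧ y * s = b := by
  set p := minpoly F y with hp
  have hint : IsIntegral F y := (Algebra.IsAlgebraic.isAlgebraic y).isIntegral
  have hp0 : p ≠ 0 := minpoly.ne_zero hint
  obtain ⟨m, hm, hmax⟩ := Finset.exists_max_image (Finset.range (p.natDegree + 1))
    (fun j => W.valuation (algebraMap F L (p.coeff j))) ⟨0, by simp⟩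
  have hm0 : p.coeff m ≠ 0 := by
    intro h0
    have := hmax p.natDegree (by simp)
    rw [h0, map_zero, map_zero, coeff_natDegree, le_zero_iff, Valuation.zero_iff] at this
    simp [hp0] at this
  refine lemmaC W y hy (p.natDegree + 1) (fun j => p.coeff j / p.coeff m) ?_ ?_
    ⟨m, Finset.mem_range.1 hm, by rw [div_self hm0]; simp⟩
  · intro j
    rw [← W.valuation_le_one_iff, map_div₀, map_div₀]
    by_cases hj : j < p.natDegree + 1
    · refine div_le_one_of_le₀ (hmax j (Finset.mem_range.2 hj)) zero_le
    · rw [coeff_eq_zero_of_natDegree_lt (by omega)]; simp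
  · have := minpoly.aeval F y
    rw [← hp, aeval_eq_sum_range] at this
    calc _ = (algebraMap F L (p.coeff m))⁻¹ * ∑ i ∈ Finset.range (p.natDegree + 1), p.coeff i • y ^ i := by
            rw [Finset.mul_sum]
            refine Finset.sum_congr rfl fun j _ => ?_
            rw [Algebra.smul_def, map_div₀]; ring
         _ = 0 := by rw [this, mul_zero]
end intcrit
end UD

namespace UD
open Polynomial

lemma lemmaI {K F : Type u} [Field K] [Field F] [Algebra K F] [IsAlgClosed K]
    {Γ : Type*} [LinearOrderedCommGroupWithZero Γ] (v : Valuation F Γ) (x : F)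
    (hx : Transcendental K x) (hF : ∀ z : F, ∃ p q : K[X], z = aeval x p / aeval x q)
    (hnt : ∃ c : K, 1 < v (algebraMap K F c)) (Z : Finset F) (hZ : ∀ z ∈ Z, v z ≤ 1) :
    ∃ (D : Type u) (_ : CommRing D) (_ : Algebra D F) (ψ : D →+* K),
      Function.Injective (algebraMap D F) ∧
      (∀ c : K, ∃ d, algebraMap D F d = algebraMap K F c ∧ ψ d = c) ∧
      ∀ z ∈ Z, ∃ d, algebraMap D F d = z ∧ v (algebraMap K F (ψ d)) ≤ 1 ∧
        (v z = 1 → v (algebraMap K F (ψ d)) = 1) := by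
  classical
  have hinj : Function.Injective (aeval x : K[X] →ₐ[K] F) := transcendental_iff_injective.1 hx
  have hF' : ∀ z : F, ∃ pq : K[X] × K[X], pq.2 ≠ 0 ∧ z * aeval x pq.2 = aeval x pq.1 := by
    intro z
    obtain ⟨p, q, h⟩ := hF z
    by_cases hq : q = 0
    · exact ⟨(0, 1), one_ne_zero, by simp [h, hq]⟩
    · refine ⟨(p, q), hq, ?_⟩
      have : aeval x q ≠ 0 := fun h0 => hq (hinj (by simpa using h0))
      rw [h]; field_simp
  choose pq hpq0 hpq using hF'
  have hpqx : ∀ z, v (aeval x (pq z).2) ≠ 0 := fun z => by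
    rw [Valuation.ne_zero_iff]
    exact fun h0 => hpq0 z (hinj (by simpa using h0))
  have hvz : ∀ z, v (aeval x (pq z).1) = v z * v (aeval x (pq z).2) := fun z => by
    rw [← hpq, map_mul]
  let T : Finset (K[X] × K[X]) := Z.image pq ∪ (Z.filter fun z => v z = 1).image fun z => (pq z).swap
  obtain ⟨a, ha⟩ := onevar v x (fun a h => hx (h ▸ isAlgebraic_algebraMap a)) hnt T (by
    intro t ht
    rcases Finset.mem_union.1 ht with h | h
    · obtain ⟨z, hz, rfl⟩ := Finset.mem_image.1 h
      refine ⟨hpq0 z, ?_⟩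
      rw [hvz]
      exact mul_le_of_le_one_left' (hZ z hz)
    · obtain ⟨z, hz, rfl⟩ := Finset.mem_image.1 h
      have hz1 := (Finset.mem_filter.1 hz).2
      refine ⟨fun h0 => ?_, ?_⟩
      · have := hvz z
        rw [hz1, one_mul] at this
        simp only [Prod.snd_swap] at h0
        rw [h0, map_zero, map_zero] at this
        exact hpqx z this.symm
      · simp only [Prod.snd_swap, Prod.fst_swap]
        rw [hvz, hz1, one_mul])
  let M : Submonoid K[X] := (nonZeroDivisors K).comap (evalRingHom a)
  have hM : ∀ q : K[X], q ∈ M ↔ q.eval a ≠ 0 := fun q => by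
    simp [M, Submonoid.mem_comap]
  have hu1 : ∀ y : M, IsUnit ((aeval x : K[X] →ₐ[K] F).toRingHom y) := fun y => by
    rw [isUnit_iff_ne_zero]
    intro h0
    have h1 : (y : K[X]) = 0 := hinj (by simpa using h0)
    exact (hM y).1 y.2 (by rw [h1]; simp)
  have hu2 : ∀ y : M, IsUnit (evalRingHom a y) := fun y => by
    rw [isUnit_iff_ne_zero]; exact (hM y).1 y.2
  let jj : Localization M →+* F := IsLocalization.lift hu1
  let ψ : Localization M →+* K := IsLocalization.lift hu2
  have hj : ∀ p : K[X], jj (algebraMap _ _ p) = aeval x p := fun p => IsLocalization.lift_eq hu1 p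
  have hψ : ∀ p : K[X], ψ (algebraMap _ _ p) = p.eval a := fun p => IsLocalization.lift_eq hu2 p
  refine ⟨Localization M, inferInstance, jj.toAlgebra, ψ, ?_, ?_, ?_⟩
  · change Function.Injective jj
    rw [IsLocalization.lift_injective_iff]
    intro p q
    constructor
    · intro h
      have := congrArg jj h
      rwa [hj, hj] at this
    · intro h
      rw [hinj h]
  · intro c
    refine ⟨algebraMap _ _ (C c), ?_, ?_⟩
    · change jj _ = _
      rw [hj, aeval_C]
    · rw [hψ, eval_C]
  · intro z hz
    have h1 := ha (pq z) (Finset.mem_union_left _ (Finset.mem_image_of_mem _ hz))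
    let q : M := ⟨(pq z).2, (hM _).2 h1.1⟩
    let d : Localization M := IsLocalization.mk' _ (pq z).1 q
    have hd : d * algebraMap _ _ (pq z).2 = algebraMap _ _ (pq z).1 :=
      IsLocalization.mk'_spec _ (pq z).1 q
    have e1 := congrArg jj hd
    have e2 := congrArg ψ hd
    rw [map_mul, hj, hj, ← hpq] at e1
    rw [map_mul, hψ, hψ] at e2
    have e3 : v (algebraMap K F (ψ d)) * v (algebraMap K F ((pq z).2.eval a)) =
      v (algebraMap K F ((pq z).1.eval a)) := by rw [← map_mul, ← map_mul, e2]
    have hne : v (algebraMap K F ((pq z).2.eval a)) ≠ 0 := by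
      simpa using h1.1
    have hle : v (algebraMap K F (ψ d)) ≤ 1 := by
      rw [← mul_le_mul_iff_left₀ (zero_lt_iff.2 hne), e3, one_mul]
      exact h1.2
    refine ⟨d, ?_, hle, fun hz1 => ?_⟩
    · change jj d = z
      refine mul_right_cancel₀ ?_ e1
      have := hpqx z
      rwa [Valuation.ne_zero_iff] at this
    · refine le_antisymm hle ?_
      have h2 := ha (pq z).swap (Finset.mem_union_right _ (Finset.mem_image_of_mem _
        (Finset.mem_filter.2 ⟨hz, hz1⟩)))
      rw [← mul_le_mul_iff_left₀ (zero_lt_iff.2 hne), e3, one_mul]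
      exact h2.2

lemma lemmaG {D L K : Type u} [CommRing D] [Field L] [Algebra D L] [Field K] [IsAlgClosed K]
    (hinj : Function.Injective (algebraMap D L)) (ψ : D →+* K) (hψ : Function.Surjective ψ) :
    ∃ χ : integralClosure D L →+* K, ∀ d, χ (algebraMap D _ d) = ψ d := by
  have hinj' : Function.Injective (algebraMap D (integralClosure D L)) := fun a b h =>
    hinj (congrArg Subtype.val h)
  have hmax : (RingHom.ker ψ).IsMaximal := RingHom.ker_isMaximal_of_surjective ψ hψ
  obtain ⟨Q, hQ, hQ'⟩ := Ideal.exists_ideal_over_maximal_of_isIntegral (S := integralClosure D L)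
    (RingHom.ker ψ) (by
      rw [(RingHom.injective_iff_ker_eq_bot _).1 hinj']; exact bot_le)
  let _ : Field (integralClosure D L ⧸ Q) := Ideal.Quotient.field Q
  let e := RingHom.quotientKerEquivOfSurjective hψ
  let g0 : D ⧸ RingHom.ker ψ →+* integralClosure D L ⧸ Q :=
    Ideal.quotientMap Q (algebraMap D (integralClosure D L)) hQ'.ge
  let g : K →+* integralClosure D L ⧸ Q := g0.comp e.symm.toRingHom
  have hg : ∀ d, g (ψ d) = Ideal.Quotient.mk Q (algebraMap D _ d) := by
    intro d
    have : e.symm (ψ d) = Ideal.Quotient.mk _ d := by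
      rw [RingEquiv.symm_apply_eq]; rfl
    change g0 (e.symm (ψ d)) = _
    rw [this]
    rfl
  have hbij : Function.Bijective g := by
    apply IsAlgClosed.ringHom_bijective_of_isIntegral
    intro z
    obtain ⟨y, rfl⟩ := Ideal.Quotient.mk_surjective z
    obtain ⟨p, hp, hy⟩ := Algebra.IsIntegral.isIntegral (R := D) y
    refine ⟨p.map ψ, hp.map _, ?_⟩
    rw [eval₂_map, ← map_zero (Ideal.Quotient.mk Q), ← hy, hom_eval₂]
    congr 1
    ext d
    exact hg d
  let ge := RingEquiv.ofBijective g hbij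
  refine ⟨ge.symm.toRingHom.comp (Ideal.Quotient.mk Q), fun d => ?_⟩
  change ge.symm _ = _
  rw [RingEquiv.symm_apply_eq]
  exact (hg d).symm
end UD

namespace UD
open Polynomial

section val
variable {K : Type*} [Field K] {Γ : Type*} [LinearOrderedCommGroupWithZero Γ] (v : Valuation K Γ)

lemma monic_eval_eq {p : K[X]} (hp : p.Monic) {r : K} (hr : p.eval r = 0) :
    r ^ p.natDegree = - ∑ i ∈ Finset.range p.natDegree, p.coeff i * r ^ i := by
  have := hp.as_sum
  have h := congrArg (Polynomial.eval r) this
  rw [hr, Polynomial.eval_add, Polynomial.eval_finsetSum] at h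
  simp only [Polynomial.eval_pow, Polynomial.eval_X, Polynomial.eval_mul, Polynomial.eval_C] at h
  linear_combination -h

lemma root_le {p : K[X]} (hp : p.Monic) (hc : ∀ i, v (p.coeff i) ≤ 1) {r : K}
    (hr : p.eval r = 0) : v r ≤ 1 := by
  by_contra! hgt
  have h := monic_eval_eq hp hr
  have h2 : v (r ^ p.natDegree) < v (r ^ p.natDegree) := by
    conv_lhs => rw [h, Valuation.map_neg]
    apply Valuation.map_sum_lt
    · rw [map_pow]; exact pow_ne_zero _ (ne_of_gt (lt_trans zero_lt_one hgt))
    · intro i hi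
      rw [map_mul, map_pow, map_pow]
      refine lt_of_le_of_lt (mul_le_of_le_one_left' (hc i)) ?_
      exact pow_lt_pow_right₀ hgt (Finset.mem_range.1 hi)
  exact lt_irrefl _ h2

lemma exists_unit_coeff {p : K[X]} (hp : p.Monic) (hc : ∀ i, v (p.coeff i) ≤ 1) {r : K}
    (hr : p.eval r = 0) (hr1 : v r = 1) : ∃ i < p.natDegree, v (p.coeff i) = 1 := by
  by_contra! hne
  have h := monic_eval_eq hp hr
  have h2 : v (r ^ p.natDegree) < 1 := by
    rw [h, Valuation.map_neg]
    apply Valuation.map_sum_lt _ one_ne_zero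
    intro i hi
    rw [map_mul, map_pow, hr1, one_pow, mul_one]
    exact lt_of_le_of_ne (hc i) (hne i (Finset.mem_range.1 hi))
  rw [map_pow, hr1, one_pow] at h2
  exact lt_irrefl _ h2

lemma prod_coeff_lt (m : Multiset K) (hm : ∀ r ∈ m, v r < 1) :
    (∀ i < Multiset.card m, v ((m.map fun r => X - C r).prod.coeff i) < 1) ∧
    ∀ i, v ((m.map fun r => X - C r).prod.coeff i) ≤ 1 := by
  induction m using Multiset.induction_on with
  | empty =>
    refine ⟨by simp, fun i => ?_⟩
    simp only [Multiset.map_zero, Multiset.prod_zero, coeff_one]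
    split_ifs <;> simp
  | cons r m ih =>
    obtain ⟨ih1, ih2⟩ := ih fun r hr => hm r (Multiset.mem_cons_of_mem hr)
    have hr := hm r (Multiset.mem_cons_self r m)
    rw [Multiset.map_cons, Multiset.prod_cons]
    have h0 : v (((X - C r) * (m.map fun r => X - C r).prod).coeff 0) < 1 := by
      rw [mul_coeff_zero]
      simp only [coeff_sub, coeff_X_zero, coeff_C_zero, zero_sub, neg_mul, Valuation.map_neg, map_mul]
      exact mul_lt_one_of_lt_of_le hr (ih2 0)
    have h1 : ∀ i, v (r * (m.map fun r => X - C r).prod.coeff i) < 1 := fun i => by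
      rw [map_mul]; exact mul_lt_one_of_lt_of_le hr (ih2 i)
    constructor
    · intro i hi
      rw [Multiset.card_cons] at hi
      rcases i with _ | i
      · exact h0
      · rw [coeff_X_sub_C_mul]
        exact Valuation.map_sub_lt _ (ih1 i (by omega)) (h1 _)
    · intro i
      rcases i with _ | i
      · exact h0.le
      · rw [coeff_X_sub_C_mul]
        exact Valuation.map_sub_le _ (ih2 i) (h1 _).le

lemma exists_unit_root [IsAlgClosed K] {p : K[X]} (hp : p.Monic) (hc : ∀ i, v (p.coeff i) ≤ 1)
    (hu : ∃ i < p.natDegree, v (p.coeff i) = 1) : ∃ r, p.eval r = 0 ∧ v r = 1 := by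
  by_contra! hne
  have hlt : ∀ r ∈ p.roots, v r < 1 := fun r hr => by
    have h0 : p.eval r = 0 := (mem_roots'.1 hr).2
    exact lt_of_le_of_ne (root_le v hp hc h0) (hne r h0)
  have hs := IsAlgClosed.splits p
  obtain ⟨i, hi, hi1⟩ := hu
  have := (prod_coeff_lt v p.roots hlt).1 i (by rwa [← hs.natDegree_eq_card_roots])
  rw [← hs.eq_prod_roots_of_monic hp, hi1] at this
  exact lt_irrefl _ this
end val

lemma liftpoly {D F : Type*} [CommRing D] [Field F] [Algebra D F]
    (hinj : Function.Injective (algebraMap D F)) (p : F[X]) (hm : p.Monic) (P : ℕ → D → Prop)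
    (h : ∀ i, ∃ d, algebraMap D F d = p.coeff i ∧ P i d) :
    ∃ q : D[X], q.map (algebraMap D F) = p ∧ q.Monic ∧ ∀ i, P i (q.coeff i) := by
  have hl : p ∈ lifts (algebraMap D F) := by
    rw [lifts_iff_coeff_lifts]
    exact fun i => ⟨_, (h i).choose_spec.1⟩
  obtain ⟨q, rfl⟩ := (mem_lifts _).1 hl
  refine ⟨q, rfl, monic_of_injective hinj hm, fun i => ?_⟩
  obtain ⟨d, hd, hP⟩ := h i
  rw [coeff_map] at hd
  exact hinj hd ▸ hP

lemma core {D F L K : Type u} [CommRing D] [Field F] [Field L] [Field K] [IsAlgClosed K]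
    [IsAlgClosed L] [Algebra D F] [Algebra F L] [Algebra D L] [IsScalarTower D F L]
    [Algebra.IsAlgebraic F L] (hinj : Function.Injective (algebraMap D F))
    (ψ : D →+* K) (hψ : Function.Surjective ψ) (s : L) (q : D[X]) (hq : q.Monic)
    (hqs : q.map (algebraMap D F) = minpoly F s) (r : K) (hr : (q.map ψ).eval r = 0) :
    ∃ χ : integralClosure D L →+* K, (∀ d, χ (algebraMap D _ d) = ψ d) ∧
      ∀ t : integralClosure D L, (t : L) = s → χ t = r := by
  have hinj' : Function.Injective (algebraMap D L) := by
    rw [IsScalarTower.algebraMap_eq D F L]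
    exact (algebraMap F L).injective.comp hinj
  obtain ⟨χ, hχ⟩ := lemmaG hinj' ψ hψ
  have hqL : q.map (algebraMap D L) = (minpoly F s).map (algebraMap F L) := by
    rw [← hqs, Polynomial.map_map, ← IsScalarTower.algebraMap_eq]
  have hsplit := IsAlgClosed.splits (q.map (algebraMap D L))
  have hprod := hsplit.eq_prod_roots_of_monic (hq.map _)
  obtain ⟨m, hm⟩ : ∃ m : Multiset (integralClosure D L),
      m.map (fun t : integralClosure D L => (t : L)) = (q.map (algebraMap D L)).roots := by
    have : ∀ t ∈ (q.map (algebraMap D L)).roots, t ∈ integralClosure D L := by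
      intro t ht
      refine ⟨q, hq, ?_⟩
      rw [← Polynomial.eval_map]
      exact (mem_roots'.1 ht).2
    refine ⟨(q.map (algebraMap D L)).roots.pmap (fun t h => ⟨t, h⟩) this, ?_⟩
    rw [Multiset.map_pmap]
    exact (Multiset.pmap_eq_map _ (fun a => a) _ _).trans (Multiset.map_id' _)
  obtain ⟨d, rfl⟩ := hψ r
  have e1 : algebraMap D (integralClosure D L) (q.eval d) =
      (m.map fun t => algebraMap D (integralClosure D L) d - t).prod := by
    apply Subtype.val_injective
    change algebraMap D L (q.eval d) = (integralClosure D L).val _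
    rw [map_multiset_prod, Multiset.map_map, ← Polynomial.eval_map_apply, hprod, ← hm,
      Polynomial.eval_multiset_prod, Multiset.map_map, Multiset.map_map]
    congr 1
    refine Multiset.map_congr rfl fun t _ => ?_
    simp
  have e2 := congrArg χ e1
  rw [hχ, ← Polynomial.eval_map_apply, hr, map_multiset_prod, Multiset.map_map, eq_comm,
    Multiset.prod_eq_zero_iff, Multiset.mem_map] at e2
  obtain ⟨t, ht, ht0⟩ := e2
  simp only [Function.comp_apply, map_sub, hχ, sub_eq_zero] at ht0
  have htr : (t : L) ∈ (q.map (algebraMap D L)).roots := by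
    rw [← hm]; exact Multiset.mem_map_of_mem _ ht
  have hroot := (mem_roots'.1 htr).2
  have hconj : IsConjRoot F s (t : L) := by
    rw [isConjRoot_iff_aeval_eq_zero (Algebra.IsAlgebraic.isAlgebraic s).isIntegral,
      aeval_def, ← Polynomial.eval_map, ← hqL]
    exact hroot
  have : IsAlgClosure F L := ⟨inferInstance, inferInstance⟩
  have : Normal F L := IsAlgClosure.normal F L
  obtain ⟨τ, hτ⟩ := isConjRoot_iff_exists_algEquiv.1 hconj.symm
  let τD : L →ₐ[D] L := (τ : L →ₐ[F] L).restrictScalars D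
  refine ⟨χ.comp τD.mapIntegralClosure.toRingHom, fun d' => ?_, fun z hz => ?_⟩
  · rw [← hχ d']
    change χ (τD.mapIntegralClosure _) = _
    rw [AlgHom.commutes]
  · change χ (τD.mapIntegralClosure z) = _
    rw [ht0]
    congr 1
    apply Subtype.val_injective
    rw [AlgHom.coe_mapIntegralClosure, hz]
    exact hτ
end UD

namespace UD
open Polynomial

lemma onestepF {K F L : Type u} [Field K] [Field F] [Field L] [Algebra K F] [Algebra F L]
    [Algebra K L] [IsScalarTower K F L] [IsAlgClosed K] [IsAlgClosed L] [Algebra.IsAlgebraic F L]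
    (W : ValuationSubring L) (x : F) (hx : Transcendental K x)
    (hF : ∀ z : F, ∃ p q : K[X], z = aeval x p / aeval x q)
    (hnt : ∃ c : K, algebraMap K L c ∉ W) {n : ℕ} (y : Fin n → L) (hy : ∀ i, y i ∈ W) :
    ∃ a : Fin n → K, (∀ p : MvPolynomial (Fin n) K, MvPolynomial.aeval y p = 0 →
      MvPolynomial.aeval a p = 0) ∧ ∀ i, algebraMap K L (a i) ∈ W := by
  classical
  choose b s hb hs hs1 hbs using fun i => lemmaC2 (F := F) W (y i) (hy i)
  let s0 : L := ∏ i, s i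
  have hs0 : IsIntegral (AF W F) s0 := IsIntegral.prod _ fun i _ => hs i
  have hs01 : W.valuation s0 = 1 := by
    rw [map_prod]; exact Finset.prod_eq_one fun i _ => hs1 i
  let B : Finset L := insert s0 (Finset.univ.image b ∪ Finset.univ.image s)
  have hB : ∀ z ∈ B, IsIntegral (AF W F) z := by
    intro z hz
    rcases Finset.mem_insert.1 hz with rfl | hz
    · exact hs0
    · rcases Finset.mem_union.1 hz with hz | hz <;> obtain ⟨i, -, rfl⟩ := Finset.mem_image.1 hz
      · exact hb i
      · exact hs i
  let Z : Finset F := insert 0 (B.biUnion fun z => (minpoly F z).coeffs)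
  let v : Valuation F W.ValueGroup := W.valuation.comap (algebraMap F L)
  let vK : Valuation K W.ValueGroup := W.valuation.comap (algebraMap K L)
  have hvK : ∀ c, v (algebraMap K F c) = vK c := fun c => by
    change W.valuation (algebraMap F L (algebraMap K F c)) = W.valuation (algebraMap K L c)
    rw [← IsScalarTower.algebraMap_apply]
  have hZv : ∀ z ∈ Z, v z ≤ 1 := by
    intro z hz
    rcases Finset.mem_insert.1 hz with rfl | hz
    · rw [map_zero]; exact zero_le
    · obtain ⟨b', hb', hz⟩ := Finset.mem_biUnion.1 hz
      obtain ⟨i, -, rfl⟩ := mem_coeffs_iff.1 hz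
      exact (W.valuation_le_one_iff _).2 (good_coeff W (hB b' hb') i)
  have hZ : ∀ z ∈ B, ∀ i, (minpoly F z).coeff i ∈ Z := by
    intro z hz i
    by_cases h : (minpoly F z).coeff i = 0
    · rw [h]; exact Finset.mem_insert_self _ _
    · exact Finset.mem_insert_of_mem (Finset.mem_biUnion.2 ⟨z, hz, coeff_mem_coeffs h⟩)
  obtain ⟨D, _, _, ψ, hinj, hK, hZD⟩ := lemmaI v x hx hF (by
    obtain ⟨c, hc⟩ := hnt
    refine ⟨c, ?_⟩
    rw [hvK, ← not_le]
    exact fun h => hc ((W.valuation_le_one_iff _).1 h)) Z hZv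
  have hψ : Function.Surjective ψ := fun c => (hK c).imp fun _ h => h.2
  let _ : Algebra D L := ((algebraMap F L).comp (algebraMap D F)).toAlgebra
  have : IsScalarTower D F L := IsScalarTower.of_algebraMap_eq fun _ => rfl
  have hint : ∀ z ∈ B, IsIntegral F z := fun z _ => (Algebra.IsAlgebraic.isAlgebraic z).isIntegral
  have hlift : ∀ z ∈ B, ∃ q : D[X], q.map (algebraMap D F) = minpoly F z ∧ q.Monic ∧
      ∀ i, vK (ψ (q.coeff i)) ≤ 1 ∧ (v ((minpoly F z).coeff i) = 1 → vK (ψ (q.coeff i)) = 1) := by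
    intro z hz
    apply liftpoly hinj _ (minpoly.monic (hint z hz)) (fun i d => vK (ψ d) ≤ 1 ∧
      (v ((minpoly F z).coeff i) = 1 → vK (ψ d) = 1))
    intro i
    obtain ⟨d, h1, h2, h3⟩ := hZD _ (hZ z hz i)
    rw [hvK] at h2 h3
    exact ⟨d, h1, h2, h3⟩
  have hs0B : s0 ∈ B := Finset.mem_insert_self _ _
  obtain ⟨q, hq1, hq2, hq3⟩ := hlift s0 hs0B
  have hqdeg : (q.map ψ).natDegree = (minpoly F s0).natDegree := by
    rw [hq2.natDegree_map, ← hq1, hq2.natDegree_map]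
  obtain ⟨r, hr, hr1⟩ := exists_unit_root vK (hq2.map ψ) (fun i => by
      rw [coeff_map]; exact (hq3 i).1) (by
    obtain ⟨i, hi, hi1⟩ := exists_unit_coeff W.valuation
      (p := (minpoly F s0).map (algebraMap F L)) ((minpoly.monic (hint s0 hs0B)).map _) (fun i => by
        rw [coeff_map]
        exact (W.valuation_le_one_iff _).2 (good_coeff W hs0 i)) (r := s0) (by
        rw [Polynomial.eval_map, ← aeval_def, minpoly.aeval]) hs01
    rw [natDegree_map] at hi
    rw [coeff_map] at hi1
    exact ⟨i, hqdeg ▸ hi, by rw [coeff_map]; exact (hq3 i).2 hi1⟩)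
  obtain ⟨χ, hχ, hχs⟩ := core (L := L) hinj ψ hψ s0 q hq2 hq1 r hr
  -- elements of B are integral over D, with bounded images
  have hBE : ∀ z ∈ B, ∃ t : integralClosure D L, (t : L) = z ∧ vK (χ t) ≤ 1 := by
    intro z hz
    obtain ⟨q, hq1, hq2, hq3⟩ := hlift z hz
    have hz0 : eval₂ (algebraMap D L) z q = 0 := by
      have := minpoly.aeval F z
      rw [← hq1, aeval_map_algebraMap] at this
      exact this
    refine ⟨⟨z, q, hq2, hz0⟩, rfl, ?_⟩
    apply root_le vK (hq2.map ψ) (fun i => by rw [coeff_map]; exact (hq3 i).1)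
    have : eval₂ (algebraMap D (integralClosure D L)) ⟨z, q, hq2, hz0⟩ q = 0 := by
      apply Subtype.val_injective
      change (integralClosure D L).val.toRingHom _ = 0
      rw [hom_eval₂]
      exact hz0
    have h2 := congrArg χ this
    rw [hom_eval₂, map_zero] at h2
    rw [Polynomial.eval_map, ← h2]
    congr 1
    ext d
    exact (hχ d).symm
  choose bE hbE hbE1 using fun i => hBE (b i) (Finset.mem_insert_of_mem
    (Finset.mem_union_left _ (Finset.mem_image_of_mem _ (Finset.mem_univ i))))
  choose sE hsE hsE1 using fun i => hBE (s i) (Finset.mem_insert_of_mem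
    (Finset.mem_union_right _ (Finset.mem_image_of_mem _ (Finset.mem_univ i))))
  have hprod : χ (∏ i, sE i) = r := hχs _ (by
    change (integralClosure D L).val _ = _
    rw [map_prod]
    exact Finset.prod_congr rfl fun i _ => hsE i)
  have hsEu : ∀ i, vK (χ (sE i)) = 1 := by
    rw [← hprod, map_prod, map_prod] at hr1
    intro i
    refine le_antisymm (hsE1 i) ?_
    rw [← hr1, ← Finset.mul_prod_erase _ _ (Finset.mem_univ i)]
    exact mul_le_of_le_one_right' (Finset.prod_le_one' fun j _ => hsE1 j)
  have hsE0 : ∀ i, χ (sE i) ≠ 0 := fun i h => by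
    have := hsEu i
    rw [h, map_zero] at this
    exact zero_ne_one this
  -- the map from K
  have hKE : ∀ c : K, algebraMap K L c ∈ integralClosure D L := fun c => by
    obtain ⟨d, hd, -⟩ := hK c
    have : algebraMap D L d = algebraMap K L c := by
      rw [IsScalarTower.algebraMap_apply D F L, hd, ← IsScalarTower.algebraMap_apply]
    rw [← this]
    exact Subalgebra.algebraMap_mem _ _
  let κ : K →+* integralClosure D L := RingHom.codRestrict (algebraMap K L) (integralClosure D L) hKE
  have hκχ : ∀ c, χ (κ c) = c := fun c => by
    obtain ⟨d, hd, hd'⟩ := hK c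
    have : κ c = algebraMap D _ d := by
      apply Subtype.val_injective
      change algebraMap K L c = algebraMap D L d
      rw [IsScalarTower.algebraMap_apply D F L, hd, ← IsScalarTower.algebraMap_apply]
    rw [this, hχ, hd']
  let M : Submonoid (integralClosure D L) := (nonZeroDivisors K).comap χ
  have hM : ∀ q, q ∈ M ↔ χ q ≠ 0 := fun q => by
    simp [M, Submonoid.mem_comap]
  have hu1 : ∀ y : M, IsUnit ((integralClosure D L).val.toRingHom y) := fun y => by
    rw [isUnit_iff_ne_zero]
    intro h0
    have h1 : (y : integralClosure D L) = 0 := Subtype.val_injective h0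
    exact (hM y).1 y.2 (by rw [h1]; simp)
  have hu2 : ∀ y : M, IsUnit (χ y) := fun y => by
    rw [isUnit_iff_ne_zero]; exact (hM y).1 y.2
  let l1 : Localization M →+* L := IsLocalization.lift hu1
  let l2 : Localization M →+* K := IsLocalization.lift hu2
  have hl1 : ∀ t : integralClosure D L, l1 (algebraMap _ _ t) = t := fun p => IsLocalization.lift_eq hu1 p
  have hl2 : ∀ t : integralClosure D L, l2 (algebraMap _ _ t) = χ t := fun p => IsLocalization.lift_eq hu2 p
  have hl1inj : Function.Injective l1 := by
    rw [IsLocalization.lift_injective_iff]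
    intro p q
    constructor
    · intro h
      have := congrArg l1 h
      rwa [hl1, hl1] at this
    · intro h
      rw [Subtype.val_injective h]
  let Y : Fin n → Localization M := fun i => IsLocalization.mk' _ (bE i) ⟨sE i, (hM _).2 (hsE0 i)⟩
  have hY : ∀ i, Y i * algebraMap _ _ (sE i) = algebraMap _ _ (bE i) := fun i =>
    IsLocalization.mk'_spec _ (bE i) ⟨sE i, (hM _).2 (hsE0 i)⟩
  have hY1 : ∀ i, l1 (Y i) = y i := fun i => by
    have := congrArg l1 (hY i)
    rw [map_mul, hl1, hl1, hsE, hbE, ← hbs] at this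
    refine mul_right_cancel₀ (fun h0 => ?_) this
    have h1 := hs1 i
    rw [h0, map_zero] at h1
    exact zero_ne_one h1
  refine ⟨fun i => l2 (Y i), fun p hp => ?_, fun i => ?_⟩
  · have h1 : MvPolynomial.eval₂ ((algebraMap _ (Localization M)).comp κ) Y p = 0 := by
      apply hl1inj
      rw [MvPolynomial.eval₂_comp_left, map_zero, ← hp, MvPolynomial.aeval_def]
      congr 1
      · ext c
        exact hl1 _
      · funext i
        exact hY1 i
    have h2 := congrArg l2 h1
    rw [MvPolynomial.eval₂_comp_left, map_zero] at h2
    rw [← h2, MvPolynomial.aeval_def]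
    congr 1
    ext c
    exact ((hl2 _).trans (hκχ c)).symm
  · rw [← W.valuation_le_one_iff]
    change vK (l2 (Y i)) ≤ 1
    have := congrArg (fun t => vK (l2 t)) (hY i)
    simp only [map_mul, hl2, hsEu, mul_one] at this
    rw [this]
    exact hbE1 i
end UD

namespace UD
open Polynomial IntermediateField

lemma onestep {K L : Type u} [Field K] [Field L] [Algebra K L] [IsAlgClosed K] [IsAlgClosed L]
    (x : L) [Algebra.IsAlgebraic K⟮x⟯ L] (W : ValuationSubring L)
    (hnt : ∃ c : K, algebraMap K L c ∉ W) {n : ℕ} (y : Fin n → L) (hy : ∀ i, y i ∈ W) :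
    ∃ a : Fin n → K, (∀ p : MvPolynomial (Fin n) K, MvPolynomial.aeval y p = 0 →
      MvPolynomial.aeval a p = 0) ∧ ∀ i, algebraMap K L (a i) ∈ W := by
  by_cases hx : Transcendental K x
  · refine onestepF (F := K⟮x⟯) W (AdjoinSimple.gen K x) ?_ ?_ hnt y hy
    · intro h
      apply hx
      have := h.algebraMap (A := L)
      rwa [AdjoinSimple.algebraMap_gen] at this
    · rintro ⟨z, hz⟩
      obtain ⟨p, q, h⟩ := mem_adjoin_simple_iff K z |>.1 hz
      refine ⟨p, q, ?_⟩
      apply (algebraMap K⟮x⟯ L).injective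
      rw [map_div₀, ← aeval_algebraMap_apply, ← aeval_algebraMap_apply,
        AdjoinSimple.algebraMap_gen]
      exact h
  · have hx' : IsAlgebraic K x := not_not.1 hx
    have h1 : Algebra.IsAlgebraic K K⟮x⟯ := isAlgebraic_adjoin_simple hx'.isIntegral
    have h2 : Algebra.IsAlgebraic K L := Algebra.IsAlgebraic.trans K K⟮x⟯ L
    have h3 : Function.Bijective (algebraMap K L) :=
      IsAlgClosed.algebraMap_bijective_of_isIntegral
    choose a ha using fun i => h3.2 (y i)
    obtain rfl : (fun i => algebraMap K L (a i)) = y := funext ha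
    refine ⟨a, fun p hp => ?_, hy⟩
    apply h3.1
    rw [map_zero, ← hp]
    exact (MvPolynomial.aeval_algebraMap_apply L a p).symm

theorem EC {Ω : Type u} [Field Ω] [IsAlgClosed Ω] (W : ValuationSubring Ω) (n : ℕ) :
    ∀ {K : Type u} [Field K] [Algebra K Ω] [IsAlgClosed K] (_ : ∃ c : K, algebraMap K Ω c ∉ W)
    (y : Fin n → Ω) (_ : ∀ i, y i ∈ W),
    ∃ a : Fin n → K, (∀ p : MvPolynomial (Fin n) K, MvPolynomial.aeval y p = 0 →
      MvPolynomial.aeval a p = 0) ∧ ∀ i, algebraMap K Ω (a i) ∈ W := by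
  induction n with
  | zero =>
    intro K _ _ _ _ y _
    refine ⟨Fin.elim0, fun p hp => ?_, fun i => i.elim0⟩
    apply (algebraMap K Ω).injective
    rw [map_zero, ← hp, ← MvPolynomial.aeval_algebraMap_apply]
    congr 1
    exact congrArg _ (Subsingleton.elim _ _)
  | succ n ih =>
    intro K _ _ _ hnt y hy
    let x := y 0
    let L := algebraicClosure K⟮x⟯ Ω
    have : IsAlgClosed L := IsAlgClosure.isAlgClosed K⟮x⟯
    have : IsScalarTower K L Ω := IsScalarTower.of_algebraMap_eq fun _ => rfl
    obtain ⟨b, hb, hbW⟩ := ih (K := L) (by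
      obtain ⟨c, hc⟩ := hnt
      exact ⟨algebraMap K L c, hc⟩) (fun i => y i.succ) (fun i => hy _)
    let xL : L := algebraMap K⟮x⟯ L (AdjoinSimple.gen K x)
    have hxL : algebraMap L Ω xL = x := rfl
    have hle : ∀ z : K⟮x⟯, algebraMap K⟮x⟯ L z ∈ K⟮xL⟯ := by
      intro z
      obtain ⟨p, q, h⟩ := mem_adjoin_simple_iff K (z : Ω) |>.1 z.2
      rw [mem_adjoin_simple_iff]
      refine ⟨p, q, ?_⟩
      apply (algebraMap L Ω).injective
      rw [map_div₀, ← aeval_algebraMap_apply, ← aeval_algebraMap_apply, hxL]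
      exact h
    have halg : Algebra.IsAlgebraic K⟮xL⟯ L := by
      refine ⟨fun z => ?_⟩
      obtain ⟨p, hp, hz⟩ := Algebra.IsAlgebraic.isAlgebraic (R := K⟮x⟯) z
      let g : K⟮x⟯ →+* K⟮xL⟯ := RingHom.codRestrict (algebraMap K⟮x⟯ L) K⟮xL⟯ hle
      refine ⟨p.map g, (Polynomial.map_ne_zero_iff g.injective).2 hp, ?_⟩
      rw [aeval_def, eval₂_map]
      exact hz
    obtain ⟨a, ha, haW⟩ := onestep (K := K) xL (W.comap (algebraMap L Ω)) hnt
      (Fin.cons xL b : Fin (n + 1) → L) (fun i => by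
        refine Fin.cases ?_ (fun i => ?_) i
        · exact hy 0
        · exact hbW i)
    refine ⟨a, fun p hp => ha p ?_, haW⟩
    -- specialise the tail
    let θ : MvPolynomial (Fin (n + 1)) K →ₐ[K] MvPolynomial (Fin n) L :=
      MvPolynomial.aeval (Fin.cons (MvPolynomial.C xL) MvPolynomial.X)
    have h1 : MvPolynomial.aeval (fun i : Fin n => y i.succ) (θ p) = 0 := by
      rw [← hp]
      have : ((MvPolynomial.aeval (fun i : Fin n => y i.succ) :
          MvPolynomial (Fin n) L →ₐ[L] Ω).restrictScalars K).comp θ = MvPolynomial.aeval y := by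
        apply MvPolynomial.algHom_ext
        intro i
        refine Fin.cases ?_ (fun i => ?_) i
        · simp [θ, hxL, x]
        · simp [θ]
      exact DFunLike.congr_fun this p
    have h2 := hb _ h1
    have : ((MvPolynomial.aeval b :
          MvPolynomial (Fin n) L →ₐ[L] L).restrictScalars K).comp θ =
          MvPolynomial.aeval (Fin.cons xL b : Fin (n + 1) → L) := by
      apply MvPolynomial.algHom_ext
      intro i
      refine Fin.cases ?_ (fun i => ?_) i
      · simp [θ]
      · simp [θ]
    rw [← this]
    exact h2
end UD

namespace UD
open Polynomial

lemma algClosed_frac (V : Type u) [CommRing V] [IsDomain V]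
    (hroot : ∀ (n : ℕ) (a : Fin (n + 1) → V),
      ∃ t, t ^ (n + 1) + ∑ i : Fin (n + 1), a i * t ^ (i : ℕ) = 0) :
    IsAlgClosed (FractionRing V) := by
  classical
  apply IsAlgClosed.of_exists_root
  intro p hp hirr
  obtain ⟨n, hn⟩ : ∃ n, p.natDegree = n + 1 :=
    Nat.exists_eq_succ_of_ne_zero hirr.natDegree_pos.ne'
  obtain ⟨d, hd⟩ := IsLocalization.exist_integer_multiples_of_finset (nonZeroDivisors V)
    ((Finset.range (n + 1)).image p.coeff)
  have hd' : ∀ i : Fin (n + 1), ∃ w : V, algebraMap V (FractionRing V) w =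
      algebraMap V (FractionRing V) d * p.coeff i := by
    intro i
    obtain ⟨w, hw⟩ := hd (p.coeff i) (Finset.mem_image_of_mem _ (Finset.mem_range.2 i.2))
    exact ⟨w, by rw [hw, Algebra.smul_def]⟩
  choose w hw using hd'
  obtain ⟨t, ht⟩ := hroot n fun i => w i * d ^ (n - i)
  have hd0 : algebraMap V (FractionRing V) d ≠ 0 :=
    IsFractionRing.to_map_ne_zero_of_mem_nonZeroDivisors d.2
  set δ := algebraMap V (FractionRing V) d with hδ
  refine ⟨algebraMap V _ t / δ, ?_⟩
  have h1 := congrArg (algebraMap V (FractionRing V)) ht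
  simp only [map_add, map_pow, map_sum, map_mul, map_zero, hw, ← hδ] at h1
  have h2 := hp.as_sum
  have h3 := congrArg (Polynomial.eval (algebraMap V (FractionRing V) t / δ)) h2
  rw [Polynomial.eval_add, Polynomial.eval_finsetSum] at h3
  simp only [Polynomial.eval_pow, Polynomial.eval_X, Polynomial.eval_mul, Polynomial.eval_C] at h3
  rw [hn, ← Fin.sum_univ_eq_sum_range (fun i => p.coeff i * (algebraMap V (FractionRing V) t / δ) ^ i)
    (n + 1)] at h3
  rw [h3]
  have hδn : δ ^ (n + 1) ≠ 0 := pow_ne_zero _ hd0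
  apply mul_left_cancel₀ hδn
  rw [mul_zero, ← h1, mul_add, Finset.mul_sum]
  congr 1
  · rw [div_pow]; field_simp
  · refine Finset.sum_congr rfl fun i _ => ?_
    obtain ⟨m, hm⟩ : ∃ m, n = i + m := ⟨n - i, by have := i.2; omega⟩
    rw [div_pow, show n - (i : ℕ) = m by omega]
    have : δ ^ (n + 1) = δ ^ (i : ℕ) * δ ^ m * δ := by
      rw [← pow_add, ← hm, pow_succ]
    rw [this]
    field_simp

lemma EC' {Ω K : Type u} [Field Ω] [IsAlgClosed Ω] (W : ValuationSubring Ω) (n : ℕ)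
    [Field K] [Algebra K Ω] [IsAlgClosed K] (y : Fin n → Ω) (hy : ∀ i, y i ∈ W) :
    ∃ a : Fin n → K, (∀ p : MvPolynomial (Fin n) K, MvPolynomial.aeval y p = 0 →
      MvPolynomial.aeval a p = 0) ∧ ∀ i, algebraMap K Ω (a i) ∈ W := by
  by_cases hnt : ∃ c : K, algebraMap K Ω c ∉ W
  · exact EC W n hnt y hy
  · push Not at hnt
    let I : Ideal (MvPolynomial (Fin n) K) :=
      RingHom.ker (MvPolynomial.aeval y : MvPolynomial (Fin n) K →ₐ[K] Ω)
    have hI : I ≠ ⊤ := RingHom.ker_ne_top _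
    obtain ⟨M, hM, hIM⟩ := Ideal.exists_le_maximal I hI
    obtain ⟨a, rfl⟩ := (MvPolynomial.isMaximal_iff_eq_vanishingIdeal_singleton).1 hM
    refine ⟨a, fun p hp => ?_, fun i => hnt _⟩
    have := hIM (show p ∈ I from hp)
    rw [MvPolynomial.mem_vanishingIdeal_singleton_iff] at this
    exact this

theorem partIII {R S V V' : Type u} [CommRing R] [CommRing S] [CommRing V] [IsDomain V]
    [ValuationRing V] [CommRing V'] [IsDomain V'] [ValuationRing V']
    (hroot : ∀ (n : ℕ) (a : Fin (n + 1) → V),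
      ∃ t, t ^ (n + 1) + ∑ i : Fin (n + 1), a i * t ^ (i : ℕ) = 0)
    (f : R →+* S) (hf : f.FiniteType) (g : R →+* V) (h : V →+* V') (hinj : Function.Injective h)
    (hloc : IsLocalHom h) (k : S →+* V') (hk : k.comp f = h.comp g) :
    ∃ k' : S →+* V, k'.comp f = g := by
  have := algClosed_frac V hroot
  let K := FractionRing V
  let Ω := AlgebraicClosure (FractionRing V')
  let m : V' →+* Ω := (algebraMap (FractionRing V') Ω).comp (algebraMap V' (FractionRing V'))
  have hm : Function.Injective m :=
    (algebraMap (FractionRing V') Ω).injective.comp (IsFractionRing.injective V' _)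
  obtain ⟨W, hW, hWloc⟩ := IsLocalRing.exists_factor_valuationRing m
  have hmh : Function.Injective (m.comp h) := hm.comp hinj
  let j : K →+* Ω := IsFractionRing.lift hmh
  have hj : ∀ w, j (algebraMap V K w) = m (h w) := fun w => IsFractionRing.lift_algebraMap hmh w
  let _ : Algebra K Ω := j.toAlgebra
  have hKW : ∀ c : K, j c ∈ W → ∃ w : V, algebraMap V K w = c := by
    intro c hc
    rcases ValuationRing.isInteger_or_isInteger V c with ⟨w, hw⟩ | ⟨w, hw⟩
    · exact ⟨w, hw⟩
    · by_cases hc0 : c = 0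
      · exact ⟨0, by rw [hc0, map_zero]⟩
      have hu : IsUnit (m.codRestrict W.toSubring hW (h w)) := by
        refine IsUnit.of_mul_eq_one ⟨j c, hc⟩ ?_
        apply Subtype.val_injective
        change m (h w) * j c = 1
        rw [← hj, hw, ← map_mul, inv_mul_cancel₀ hc0, map_one]
      have hu2 : IsUnit w := hloc.map_nonunit _ (hWloc.map_nonunit _ hu)
      obtain ⟨w', hw'⟩ := hu2.exists_right_inv
      refine ⟨w', ?_⟩
      have h1 := congrArg (algebraMap V K) hw'
      rw [map_mul, hw, map_one] at h1
      exact ((inv_mul_eq_iff_eq_mul₀ hc0).1 h1).trans (mul_one c)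
  let _ : Algebra R S := f.toAlgebra
  obtain ⟨n, π, hπ⟩ := Algebra.FiniteType.iff_quotient_mvPolynomial''.1
    (show Algebra.FiniteType R S from hf)
  let y : Fin n → Ω := fun i => m (k (π (MvPolynomial.X i)))
  obtain ⟨a, ha, haW⟩ := EC' (K := K) W n y fun i => hW _
  choose w hw using fun i => hKW (a i) (haW i)
  let ev : MvPolynomial (Fin n) R →+* V := MvPolynomial.eval₂Hom g w
  have hker : RingHom.ker π.toRingHom ≤ RingHom.ker ev := by
    intro p hp
    rw [RingHom.mem_ker] at hp ⊢
    have h1 : MvPolynomial.aeval y (MvPolynomial.map ((algebraMap V K).comp g) p) = 0 := by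
      rw [MvPolynomial.aeval_def, MvPolynomial.eval₂_map]
      have e : MvPolynomial.eval₂Hom ((algebraMap K Ω).comp ((algebraMap V K).comp g)) y =
          (m.comp k).comp π.toRingHom := by
        apply MvPolynomial.ringHom_ext
        · intro r
          simp only [MvPolynomial.coe_eval₂Hom, MvPolynomial.eval₂_C]
          change j (algebraMap V K (g r)) = m (k (π (MvPolynomial.C r)))
          rw [hj]
          have h2 : π (MvPolynomial.C r) = f r := π.commutes r
          rw [h2]
          exact congrArg m (DFunLike.congr_fun hk r).symm
        · intro i
          simp only [MvPolynomial.coe_eval₂Hom, MvPolynomial.eval₂_X]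
          rfl
      have e2 := DFunLike.congr_fun e p
      refine e2.trans ?_
      change (m.comp k) (π.toRingHom p) = 0
      rw [hp, map_zero]
    have h2 := ha _ h1
    apply IsFractionRing.injective V K
    rw [map_zero, ← h2, MvPolynomial.aeval_def, MvPolynomial.eval₂_map]
    change (algebraMap V K) (MvPolynomial.eval₂ g w p) = _
    rw [MvPolynomial.eval₂_comp_left]
    congr 1
    funext i
    exact hw i
  have hπ' : Function.Surjective π.toRingHom := hπ
  refine ⟨π.toRingHom.liftOfSurjective hπ' ⟨ev, hker⟩, ?_⟩
  ext r
  have h2 : π.toRingHom (MvPolynomial.C r) = f r := π.commutes r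
  rw [RingHom.comp_apply, ← h2, RingHom.liftOfRightInverse_comp_apply]
  exact MvPolynomial.eval₂_C g w r
end UD

/-- Theorem 5.6: a finitely presented `v`-cover of commutative rings is a universal descent
morphism. Here `f : R →+* S` is a `v`-cover if for every valuation ring `V` and ring map
`R → V` there are an extension of valuation rings `V → V'` (an injective local homomorphism)
and a map `S → V'` making the evident square commute. -/
theorem stmt16 {R S : Type u} [CommRing R] [CommRing S] (f : R →+* S)
    (hfp : f.FinitePresentation)
    (hv : ∀ (V : Type u) (_ : CommRing V) (_ : IsDomain V), ValuationRing V →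
      ∀ g : R →+* V, ∃ (V' : Type u) (_ : CommRing V') (_ : IsDomain V'),
        ValuationRing V' ∧ ∃ h : V →+* V', Function.Injective h ∧ IsLocalHom h ∧
          ∃ k : S →+* V', k.comp f = h.comp g) :
    IsUniversalDescent f := by
  refine (UD.partII f hfp ?_).isUniversalDescent
  intro V _ _ hV hroot g
  obtain ⟨V', _, _, hV', h, hinj, hloc, k, hk⟩ := hv V inferInstance inferInstance hV g
  exact UD.partIII hroot f (RingHom.FiniteType.of_finitePresentation hfp) g h hinj hloc k hk
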